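/- Suppose k ≥ 4. There is a constant C(k) such that for all strictly positive integers a, b with b/a > C(k), if x lies in the closure, in (∧^k(Sym^{≤k}ℂ^k))^{⊗a} ⊗ (ℂ^k)^{⊗b}, of the orbit T_k·(p_k^{⊗a} ⊗ e_1^{⊗b}) under the maximal torus T_k of SL(k,ℂ), then either x ∈ T_k·(p_k^{⊗a} ⊗ e_1^{⊗b}) or the stabiliser of x in SL(k,ℂ) has dimension at least k+1. -/

import Mathlib

/-!
Every point `x` of the closure of a torus orbit is a torus translate of a limit of the orbit point
along a ray `s ↦ diag(exp(-s L₁), …, exp(-s L_k))` with real weights `L` of sum zero. If `L = 0`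
then `x` lies in the orbit. Otherwise let `M_n` be the least weight of a monomial in the `n`-th
wedge factor of `p_k` and `W_n` the part of that factor which has weight `M_n`. Along the ray,
`p_k^{⊗a} ⊗ e₁^{⊗b}` is asymptotic to `exp(-s (a ∑ M_n + b L₁))` times
`(W₁ ∧ ⋯ ∧ W_k)^{⊗a} ⊗ e₁^{⊗b}`, so the limit is either `0`, which all of `SL(k,ℂ)` fixes, or this
last vector, and then `a ∑ M_n + b L₁ = 0`.

In the second case it is enough to find `k + 1` independent elements in the Lie algebra of the
stabiliser. One is `diag(L₁, …, L_k)`. There is a `j` with `M_j < L_j`, for otherwise `L₁ = 0`, and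
subadditivity of `M` gives `L_n ≤ n L₁ = 0`, hence `L = 0`. For such a `j` the vector `e_j` occurs
in no `W_n`, so the `k - 1` maps `e_j ↦ e_r`, `r ≠ j`, which kill the other basis vectors, also
kill every `W_n`. The last element is a shift `e_n ↦ c_n e_{n-t}` which acts on the `W_n`
by a shift `W_n ↦ d_n W_{n-t}`: one can take `t = k - 1` if `j < k`; if `L_n = M_n` for all `n < k`
then `t` is `k - 2`, `1` or `k - 3`, according to whether `M_k` is attained by `e_{k-1} e₁` and
whether `L₂ = 2 L₁`.
-/

open scoped BigOperators ENNReal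

namespace JetPaper

/-- Monomials in `n` variables of degree between `1` and `k`:
these index the standard basis of `Sym^{≤k}ℂ^n = ⊕_{l=1}^k Sym^l ℂ^n`. -/
def Mon (n k : ℕ) : Type := {m : Fin n → ℕ // 0 < ∑ i, m i ∧ ∑ i, m i ≤ k}

noncomputable instance (n k : ℕ) : Fintype (Mon n k) :=
  Fintype.ofInjective
    (fun m : Mon n k => (fun i => (⟨m.1 i, Nat.lt_succ_of_le
        ((Finset.single_le_sum (fun _ _ => Nat.zero_le _) (Finset.mem_univ i)).trans
          m.2.2)⟩ : Fin (k + 1))))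
    (fun _ _ h => Subtype.ext (funext fun i => congrArg Fin.val (congrFun h i)))

/-- The matrix coefficient of the `GL(n)`-action on `Sym^{≤k}ℂ^n` induced by the standard
action on `ℂ^n` (`g·e_i = ∑_j g_{ji} e_j`), in the monomial basis:
`symMat g m m'` is the coefficient of the monomial `m` in the image of the monomial `m'`. -/
noncomputable def symMat {n k : ℕ} (g : Matrix (Fin n) (Fin n) ℂ) (m m' : Mon n k) : ℂ :=
  MvPolynomial.coeff (Finsupp.equivFunOnFinite.symm m.1)
    (∏ i : Fin n, (∑ j : Fin n, g j i • MvPolynomial.X j) ^ (m'.1 i))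

/-- The induced action of `g ∈ GL(n)` on `(Sym^{≤k}ℂ^n)^{⊗k}`, in coordinates.
Elements of the `k`-th tensor power of `Sym^{≤k}ℂ^n` are recorded by their coordinates
in the basis indexed by `k`-tuples of monomials; `⋀^k(Sym^{≤k}ℂ^n)` is realised inside the
tensor power as the space of antisymmetric tensors. -/
noncomputable def actV {n k : ℕ} (g : Matrix (Fin n) (Fin n) ℂ)
    (T : (Fin k → Mon n k) → ℂ) : (Fin k → Mon n k) → ℂ :=
  fun mf => ∑ mf' : Fin k → Mon n k, (∏ i, symMat g (mf i) (mf' i)) * T mf'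

/-- The wedge product `v₁ ∧ ⋯ ∧ v_k` of `k` elements of `Sym^{≤k}ℂ^n`, realised as an
antisymmetric tensor in `(Sym^{≤k}ℂ^n)^{⊗k}` (in coordinates). -/
noncomputable def wedge {n k : ℕ} (v : Fin k → (Mon n k → ℂ)) : (Fin k → Mon n k) → ℂ :=
  fun mf => ∑ σ : Equiv.Perm (Fin k), ((Equiv.Perm.sign σ : ℤ) : ℂ) * ∏ i, v (σ i) (mf i)

/-- The `j`-th coordinate polynomial of `φ(γ) ∈ Hom(ℂ^k, Sym^{≤k}ℂ^n)` for
`γ ∈ Hom(ℂ^k, ℂ^n)`: the sum over all `s ≥ 1` and all ordered `s`-tuples `(i₁,…,i_s)` of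
positive integers with `i₁+⋯+i_s = j` of the product (in the symmetric algebra,
realised as the polynomial ring in `n` variables) of the `i₁`-th, …, `i_s`-th columns
of `γ`.  A tuple of length `s = l+1` is recorded as a function `a : Fin (l+1) → Fin k`,
the value `a t` standing for the positive integer `(a t) + 1`. -/
noncomputable def colPoly {n k : ℕ} (γ : Matrix (Fin n) (Fin k) ℂ) (j : Fin k) :
    MvPolynomial (Fin n) ℂ :=
  ∑ l : Fin k, ∑ a : Fin (l.val + 1) → Fin k,
    if (∑ t, ((a t).val + 1)) = j.val + 1 then
      ∏ t, (∑ i : Fin n, γ i (a t) • MvPolynomial.X i)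
    else 0

/-- The map `φ : Hom(ℂ^k,ℂ^n) → Hom(ℂ^k, Sym^{≤k}ℂ^n)` as a matrix in the monomial basis:
rows are indexed by monomials, columns by `Fin k`. -/
noncomputable def phiMat {n k : ℕ} (γ : Matrix (Fin n) (Fin k) ℂ) :
    Matrix (Mon n k) (Fin k) ℂ :=
  fun m j => MvPolynomial.coeff (Finsupp.equivFunOnFinite.symm m.1) (colPoly γ j)

/-- `φ^{Proj}` at the level of vectors: the wedge `φ(γ)e₁ ∧ ⋯ ∧ φ(γ)e_k` of the columns of
`φ(γ)`, an element of `⋀^k(Sym^{≤k}ℂ^n)` in coordinates. -/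
noncomputable def wedgePhi {n k : ℕ} (γ : Matrix (Fin n) (Fin k) ℂ) :
    (Fin k → Mon n k) → ℂ :=
  wedge (fun j m => phiMat γ m j)

/-- The matrix of the reparametrization jet with parameters `α = (α₁,…,α_k)`
(`α_s` is recorded as `α ⟨s-1⟩`): the `(i,j)` entry is
`∑_{s₁+⋯+s_i = j, s_l ≥ 1} α_{s₁}⋯α_{s_i}` (rows and columns of `Fin k` represent
the integers `1,…,k`). -/
noncomputable def repMat (k : ℕ) (α : Fin k → ℂ) : Matrix (Fin k) (Fin k) ℂ :=
  fun i j => ∑ a : Fin (i.val + 1) → Fin k,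
    if (∑ t, ((a t).val + 1)) = j.val + 1 then ∏ t, α (a t) else 0

/-- The reparametrization group `𝔾_k ⊂ GL(k,ℂ)`. -/
def Gset (k : ℕ) : Set (Matrix (Fin k) (Fin k) ℂ) :=
  {g | ∃ α : Fin k → ℂ, (∀ i : Fin k, i.val = 0 → α i ≠ 0) ∧ g = repMat k α}

/-- The unipotent radical `𝕌_k ⊂ 𝔾_k`: the matrices `repMat k α` with `α₁ = 1`. -/
def Uset (k : ℕ) : Set (Matrix (Fin k) (Fin k) ℂ) :=
  {g | ∃ α : Fin k → ℂ, (∀ i : Fin k, i.val = 0 → α i = 1) ∧ g = repMat k α}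

/-- The distinguished point
`p_k = e₁ ∧ (e₂ + e₁²) ∧ ⋯ ∧ (∑_{i₁+⋯+i_s = k} e_{i₁}⋯e_{i_s}) ∈ ⋀^k(Sym^{≤k}ℂ^k)`,
i.e. the wedge of the columns of `φ(1)`. -/
noncomputable def pkVec (k : ℕ) : (Fin k → Mon k k) → ℂ :=
  wedgePhi (1 : Matrix (Fin k) (Fin k) ℂ)


/-- The representation space `(⋀^k(Sym^{≤k}ℂ^k))^{⊗a} ⊗ (ℂ^k)^{⊗b}`, in coordinates:
the exterior power is realised inside `(Sym^{≤k}ℂ^k)^{⊗k}`. -/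
abbrev Wab (k a b : ℕ) : Type := ((Fin a → Fin k → Mon k k) × (Fin b → Fin k)) → ℂ

/-- The basis vector `e₁ ∈ ℂ^k` (indicator of the first coordinate). -/
def e1 (k : ℕ) : Fin k → ℂ := fun i => if (i : ℕ) = 0 then 1 else 0

/-- The point `p_k^{⊗a} ⊗ e₁^{⊗b}`. -/
noncomputable def ptab (k a b : ℕ) : Wab k a b :=
  fun x => (∏ i, pkVec k (x.1 i)) * ∏ j, e1 k (x.2 j)

/-- The natural action of `g ∈ GL(k,ℂ)` on `(⋀^k(Sym^{≤k}ℂ^k))^{⊗a} ⊗ (ℂ^k)^{⊗b}`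
(extension of the standard action on `ℂ^k`), in coordinates. -/
noncomputable def actab {k a b : ℕ} (g : Matrix (Fin k) (Fin k) ℂ) (T : Wab k a b) :
    Wab k a b :=
  fun x => ∑ y : (Fin a → Fin k → Mon k k) × (Fin b → Fin k),
    (∏ i, ∏ l, symMat g (x.1 i l) (y.1 i l)) * (∏ j, g (x.2 j) (y.2 j)) * T y

/-- The standard Borel subgroup `B_k` of upper triangular matrices in `SL(k,ℂ)`. -/
def Bset (k : ℕ) : Set (Matrix (Fin k) (Fin k) ℂ) :=
  {g | g.det = 1 ∧ ∀ i j : Fin k, j < i → g i j = 0}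

/-- The standard maximal torus `T_k` of diagonal matrices in `SL(k,ℂ)`. -/
def Tset (k : ℕ) : Set (Matrix (Fin k) (Fin k) ℂ) :=
  {g | g.det = 1 ∧ ∀ i j : Fin k, i ≠ j → g i j = 0}

/-- The stabiliser in `SL(k,ℂ)` of a point `x`, as a subset of the space of `k×k`
matrices (for its Hausdorff dimension: a complex algebraic group of dimension `d`
has real Hausdorff dimension `2d`). -/
noncomputable def stabSet {k a b : ℕ} (x : Wab k a b) : Set (Fin k → Fin k → ℂ) :=
  {g | (Matrix.of g).det = 1 ∧ actab (Matrix.of g) x = x}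

section LinearSubstitution

variable {σ R : Type*} [Fintype σ] [CommSemiring R]

/-- The extension of the linear map `e_i ↦ ∑_j g_{ji} e_j` to an endomorphism of the symmetric
algebra. -/
noncomputable def linSubst (g : Matrix σ σ R) : MvPolynomial σ R →ₐ[R] MvPolynomial σ R :=
  MvPolynomial.bind₁ g.transpose.toMvPolynomial

/-- The extension of the linear map `e_i ↦ ∑_j A_{ji} e_j` to a derivation of the symmetric
algebra: the infinitesimal version of `linSubst`. -/
noncomputable def linDer :
    Matrix σ σ R →ₗ[R] Derivation R (MvPolynomial σ R) (MvPolynomial σ R) where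
  toFun A := MvPolynomial.mkDerivation R A.transpose.toMvPolynomial
  map_add' A B := MvPolynomial.derivation_ext fun i => by
    simp [MvPolynomial.mkDerivation_X, Matrix.toMvPolynomial_add]
  map_smul' c A := MvPolynomial.derivation_ext fun i => by
    simp [MvPolynomial.mkDerivation_X, Matrix.toMvPolynomial, Finset.smul_sum,
      MvPolynomial.smul_monomial]

theorem toMvPolynomial_transpose (g : Matrix σ σ R) (i : σ) :
    g.transpose.toMvPolynomial i = ∑ j, g j i • MvPolynomial.X j := by
  simp [Matrix.toMvPolynomial, MvPolynomial.X, MvPolynomial.smul_monomial]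

theorem linSubst_X (g : Matrix σ σ R) (i : σ) :
    linSubst g (MvPolynomial.X i) = ∑ j, g j i • MvPolynomial.X j := by
  rw [linSubst, MvPolynomial.bind₁_X_right, toMvPolynomial_transpose]

theorem linDer_X (A : Matrix σ σ R) (i : σ) :
    linDer A (MvPolynomial.X i) = ∑ j, A j i • MvPolynomial.X j := by
  change MvPolynomial.mkDerivation R A.transpose.toMvPolynomial (MvPolynomial.X i) = _
  rw [MvPolynomial.mkDerivation_X, toMvPolynomial_transpose]

theorem linSubst_mul (g h : Matrix σ σ R) : linSubst (g * h) = (linSubst g).comp (linSubst h) :=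
  MvPolynomial.algHom_ext fun i => by
    simp only [linSubst, AlgHom.comp_apply, MvPolynomial.bind₁_X_right, Matrix.transpose_mul,
      Matrix.toMvPolynomial_mul]

theorem isHomogeneous_linSubst (g : Matrix σ σ R) {p : MvPolynomial σ R} {n : ℕ}
    (hp : p.IsHomogeneous n) : (linSubst g p).IsHomogeneous n := by
  have h := hp.aeval _ (Matrix.toMvPolynomial_isHomogeneous g.transpose)
  rwa [one_mul] at h

theorem eval_linSubst (g : Matrix σ σ R) (v : σ → R) (p : MvPolynomial σ R) :
    MvPolynomial.eval v (linSubst g p) = MvPolynomial.eval (Matrix.vecMul v g) p := by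
  rw [linSubst, ← MvPolynomial.coe_aeval_eq_eval, RingHom.coe_coe, MvPolynomial.aeval_bind₁]
  simp only [MvPolynomial.aeval_eq_eval, Matrix.toMvPolynomial_eval_eq_apply,
    Matrix.mulVec_transpose]

end LinearSubstitution

section Exponential

open NormedSpace (exp)

attribute [local instance] Matrix.linftyOpNormedRing Matrix.linftyOpNormedAlgebra

variable {ι σ : Type*} [Fintype ι] [DecidableEq ι] [Fintype σ]

theorem hasDerivAt_linearMap_comp {E F : Type*} [NormedAddCommGroup E] [NormedSpace ℂ E]
    [FiniteDimensional ℂ E] [NormedAddCommGroup F] [NormedSpace ℂ F] (Φ : E →ₗ[ℂ] F)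
    {f : ℂ → E} {f' : E} {z : ℂ} (hf : HasDerivAt f f' z) :
    HasDerivAt (fun t => Φ (f t)) (Φ f') z :=
  Φ.toContinuousLinearMap.hasFDerivAt.comp_hasDerivAt z hf

theorem hasDerivAt_vecMul_exp (A : Matrix ι ι ℂ) (v : ι → ℂ) (z : ℂ) :
    HasDerivAt (fun t : ℂ => Matrix.vecMul v (exp (t • A)))
      (Matrix.vecMul (Matrix.vecMul v (exp (z • A))) A) z := by
  rw [Matrix.vecMul_vecMul]
  exact hasDerivAt_linearMap_comp (Matrix.vecMulBilin ℂ ℂ v) (hasDerivAt_exp_smul_const A z)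

theorem eq_vecMul_exp_of_hasDerivAt (N : Matrix ι ι ℂ) (h : ℂ → ι → ℂ)
    (hh : ∀ z, HasDerivAt h (Matrix.vecMul (h z) N) z) :
    h 1 = Matrix.vecMul (h 0) (exp N) := by
  have hderiv (j : ι) (z : ℂ) :
      HasDerivAt (fun t => Matrix.vecMul (h t) (exp (t • -N)) j) 0 z := by
    have hexp (i : ι) : HasDerivAt (fun t : ℂ => exp (t • -N) i j) ((-N * exp (z • -N)) i j) z :=
      hasDerivAt_linearMap_comp (Matrix.entryLinearMap ℂ ℂ i j)
        (hasDerivAt_exp_smul_const' (-N) z)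
    have hsum := HasDerivAt.fun_sum (u := Finset.univ) fun i _ =>
      (hasDerivAt_pi.mp (hh z) i).mul (hexp i)
    refine hsum.congr_deriv ?_
    rw [Finset.sum_add_distrib]
    change Matrix.vecMul (Matrix.vecMul (h z) N) (exp (z • -N)) j +
      Matrix.vecMul (h z) (-N * exp (z • -N)) j = 0
    rw [Matrix.vecMul_vecMul, ← Pi.add_apply, ← Matrix.vecMul_add]
    simp
  have hconst : Matrix.vecMul (h 1) (exp (-N)) = h 0 := funext fun j => by
    simpa using is_const_of_deriv_eq_zero (fun z => (hderiv j z).differentiableAt)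
      (fun z => (hderiv j z).deriv) 1 0
  rw [← hconst, Matrix.vecMul_vecMul,
    ← Matrix.exp_add_of_commute (-N) N (Commute.refl N).neg_left]
  simp

theorem hasDerivAt_eval_linDer (A : Matrix σ σ ℂ) {c : ℂ → σ → ℂ} {z : ℂ}
    (hc : HasDerivAt c (Matrix.vecMul (c z) A) z) (p : MvPolynomial σ ℂ) :
    HasDerivAt (fun t => MvPolynomial.eval (c t) p) (MvPolynomial.eval (c z) (linDer A p)) z := by
  induction p using MvPolynomial.induction_on with
  | C a => simpa [MvPolynomial.derivation_C] using hasDerivAt_const z a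
  | add p q hp hq => simpa only [map_add] using hp.fun_add hq
  | mul_X p i hp =>
    simp only [map_mul, MvPolynomial.eval_X]
    refine (hp.mul (hasDerivAt_pi.mp hc i)).congr_deriv ?_
    simp [linDer_X, Matrix.vecMul, dotProduct, MvPolynomial.smul_eval, mul_comm, add_comm]

variable [DecidableEq σ]

theorem linSubst_exp (A : Matrix σ σ ℂ) (w : ι → MvPolynomial σ ℂ) (N : Matrix ι ι ℂ)
    (hw : ∀ j, linDer A (w j) = ∑ i, N i j • w i) (j : ι) :
    linSubst (exp A) (w j) = ∑ i, exp N i j • w i := by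
  refine MvPolynomial.funext fun v => ?_
  have hvec (M : Matrix ι ι ℂ) (u : σ → ℂ) (j : ι) :
      MvPolynomial.eval u (∑ i, M i j • w i) =
        Matrix.vecMul (fun i => MvPolynomial.eval u (w i)) M j := by
    simp [Matrix.vecMul, dotProduct, MvPolynomial.smul_eval, mul_comm]
  have hflow := eq_vecMul_exp_of_hasDerivAt N
    (fun z i => MvPolynomial.eval (Matrix.vecMul v (exp (z • A))) (w i))
    fun z => hasDerivAt_pi.mpr fun i => by
      simpa only [hw, hvec] using hasDerivAt_eval_linDer A (hasDerivAt_vecMul_exp A v z) (w i)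
  rw [eval_linSubst, hvec]
  simpa using congrFun hflow j

theorem exp_mulVec_of_mulVec_eq_smul {A : Matrix ι ι ℂ} {v : ι → ℂ} {γ : ℂ}
    (hv : A.mulVec v = γ • v) : (exp A).mulVec v = Complex.exp γ • v := by
  have hflow := eq_vecMul_exp_of_hasDerivAt A.transpose (fun z => Complex.exp (z * γ) • v)
    fun z => by
      refine (((hasDerivAt_id z).mul_const γ).cexp.smul_const v).congr_deriv ?_
      rw [Matrix.vecMul_transpose, Matrix.mulVec_smul, hv, smul_smul, id, one_mul]
  rw [Matrix.exp_transpose, Matrix.vecMul_transpose] at hflow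
  simpa using hflow.symm

theorem differentiable_det : Differentiable ℂ fun M : Matrix ι ι ℂ => M.det := by
  have (i j : ι) : Differentiable ℂ fun M : Matrix ι ι ℂ => M i j :=
    (Matrix.entryLinearMap ℂ ℂ i j).toContinuousLinearMap.differentiable
  simp only [Matrix.det_apply]
  fun_prop

theorem fderiv_det_one (A : Matrix ι ι ℂ) :
    fderiv ℂ (fun M : Matrix ι ι ℂ => M.det) 1 A = A.trace := by
  have hline : HasDerivAt (fun r : ℂ => 1 + r • A) A 0 := by
    exact (((hasDerivAt_id (0 : ℂ)).smul_const A).const_add 1).congr_deriv (one_smul ℂ A)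
  have hdet : HasDerivAt (fun r : ℂ => (1 + r • A).det) A.trace 0 := by
    rw [funext fun r => Matrix.det_one_add_smul r A]
    refine ((((hasDerivAt_id (0 : ℂ)).const_mul A.trace).const_add 1).add
      ((Polynomial.hasDerivAt _ (0 : ℂ)).mul (hasDerivAt_pow 2 (0 : ℂ)))).congr_deriv ?_
    simp
  exact ((differentiable_det 1).hasFDerivAt.comp_hasDerivAt_of_eq 0 hline (by simp)).unique hdet

theorem hasDerivAt_det_exp_smul (A : Matrix ι ι ℂ) (z : ℂ) :
    HasDerivAt (fun r : ℂ => (exp (r • A)).det) ((exp (z • A)).det * A.trace) z := by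
  have h0 : HasDerivAt (fun r : ℂ => (exp (r • A)).det) A.trace (z - z) := by
    rw [sub_self, ← fderiv_det_one]
    exact (differentiable_det 1).hasFDerivAt.comp_hasDerivAt_of_eq 0
      ((hasDerivAt_exp_smul_const A (0 : ℂ)).congr_deriv (by simp)) (by simp)
  have hmul (r : ℂ) : (exp (r • A)).det = (exp (z • A)).det * (exp ((r - z) • A)).det := by
    rw [← Matrix.det_mul, ← Matrix.exp_add_of_commute _ _
      (((Commute.refl A).smul_left z).smul_right (r - z)), ← add_smul, add_sub_cancel]
  rw [funext hmul]
  exact (h0.comp_sub_const z z).const_mul (exp (z • A)).det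

theorem det_exp (A : Matrix ι ι ℂ) : (exp A).det = Complex.exp A.trace := by
  have hderiv (z : ℂ) :
      HasDerivAt (fun r => (exp (r • A)).det * Complex.exp (-(r * A.trace))) 0 z := by
    refine ((hasDerivAt_det_exp_smul A z).mul
      ((hasDerivAt_id z).mul_const A.trace).neg.cexp).congr_deriv ?_
    simp only [id]
    ring
  have hconst := is_const_of_deriv_eq_zero (fun z => (hderiv z).differentiableAt)
    (fun z => (hderiv z).deriv) 1 0
  have hone : (exp A).det * Complex.exp (-A.trace) = 1 := by simpa using hconst
  rw [Complex.exp_neg] at hone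
  exact (mul_inv_eq_one₀ (Complex.exp_ne_zero _)).mp hone

theorem two_mul_finrank_le_dimH {𝔸 : Type*} [NormedRing 𝔸] [NormedAlgebra ℂ 𝔸]
    [FiniteDimensional ℂ 𝔸] (H : Submodule ℂ 𝔸) {S : Set 𝔸} (hS : ∀ A ∈ H, exp A ∈ S) :
    (2 * Module.finrank ℂ H : ℕ) ≤ dimH S := by
  have := FiniteDimensional.complete ℂ 𝔸
  have := FiniteDimensional.complete ℂ H
  obtain ⟨P, hP⟩ := H.subtype.exists_leftInverse_of_injective H.ker_subtype
  have hexp : HasStrictFDerivAt (fun A : H => P.toContinuousLinearMap (exp (A : 𝔸)))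
      (ContinuousLinearMap.id ℂ H) 0 := by
    have hexp0 : HasStrictFDerivAt exp (1 : 𝔸 →L[ℂ] 𝔸) ((0 : H) : 𝔸) :=
      hasStrictFDerivAt_exp_zero
    refine (P.toContinuousLinearMap.hasStrictFDerivAt.comp (0 : H)
      (hexp0.comp (0 : H) H.subtypeL.hasStrictFDerivAt)).congr_fderiv ?_
    exact ContinuousLinearMap.ext fun A => LinearMap.congr_fun hP A
  have hnhds :
      P.toContinuousLinearMap '' S ∈ nhds (P.toContinuousLinearMap (exp ((0 : H) : 𝔸))) := by
    rw [← hexp.map_nhds_eq_of_surj (by simp), Filter.mem_map]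
    exact Filter.univ_mem' fun A => Set.mem_image_of_mem _ (hS A A.2)
  calc ((2 * Module.finrank ℂ H : ℕ) : ℝ≥0∞) = dimH (P.toContinuousLinearMap '' S) := by
        rw [Real.dimH_of_mem_nhds hnhds, finrank_real_of_complex]
    _ ≤ dimH S := P.toContinuousLinearMap.lipschitz.dimH_image_le S

theorem two_mul_finrank_le_dimH_of_exp (H : Submodule ℂ (Matrix σ σ ℂ)) {S : Set (σ → σ → ℂ)}
    (hS : ∀ A ∈ H, (exp A : Matrix σ σ ℂ) ∈ Matrix.of '' S) :
    (2 * Module.finrank ℂ H : ℕ) ≤ dimH S := by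
  have hof := (Matrix.ofLinearEquiv ℂ : (σ → σ → ℂ) ≃ₗ[ℂ] Matrix σ σ ℂ).toLinearMap
    |>.toContinuousLinearMap.lipschitz
  exact (two_mul_finrank_le_dimH H hS).trans (hof.dimH_image_le S)

end Exponential

section Coordinates

variable {n k : ℕ}

/-- The exponent vector of a monomial, as `MvPolynomial` expects it. -/
noncomputable def Mon.exponent (m : Mon n k) : Fin n →₀ ℕ := Finsupp.equivFunOnFinite.symm m.1

/-- The space `Sym^{≤k}ℂ^n`, as a subspace of the polynomial ring. -/
noncomputable def symLE (n k : ℕ) : Submodule ℂ (MvPolynomial (Fin n) ℂ) :=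
  MvPolynomial.restrictSupport ℂ {m | 0 < m.degree ∧ m.degree ≤ k}

/-- The coordinates of the `Sym^{≤k}ℂ^n`-part of a polynomial in the monomial basis. -/
noncomputable def coords (u : MvPolynomial (Fin n) ℂ) : Mon n k → ℂ := fun m => u.coeff m.exponent

theorem Mon.exponent_injective : Function.Injective (Mon.exponent : Mon n k → Fin n →₀ ℕ) :=
  fun _ _ h => Subtype.ext (Finsupp.equivFunOnFinite.symm.injective h)

theorem Mon.degree_exponent (m : Mon n k) : m.exponent.degree = ∑ i, m.1 i :=
  Finsupp.degree_eq_sum _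

theorem mem_symLE {u : MvPolynomial (Fin n) ℂ} :
    u ∈ symLE n k ↔ ∀ s, u.coeff s ≠ 0 → 0 < s.degree ∧ s.degree ≤ k := by
  rw [symLE, MvPolynomial.mem_restrictSupport_iff]
  exact ⟨fun h s hs => h (MvPolynomial.mem_support_iff.mpr hs),
    fun h s hs => h s (MvPolynomial.mem_support_iff.mp hs)⟩

theorem mem_symLE_of_isHomogeneous {u : MvPolynomial (Fin n) ℂ} {d : ℕ} (hu : u.IsHomogeneous d)
    (hd : 0 < d) (hdk : d ≤ k) : u ∈ symLE n k :=
  mem_symLE.mpr fun s hs => by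
    rw [Finsupp.degree_eq_weight_one, ← Pi.one_def, hu hs]
    exact ⟨hd, hdk⟩

theorem exists_exponent_eq {s : Fin n →₀ ℕ} (hs : 0 < s.degree ∧ s.degree ≤ k) :
    ∃ m : Mon n k, m.exponent = s :=
  ⟨⟨s, by simpa only [Finsupp.degree_eq_sum] using hs⟩, Finsupp.ext fun _ => rfl⟩

theorem eq_sum_monomial_exponent {u : MvPolynomial (Fin n) ℂ} (hu : u ∈ symLE n k) :
    u = ∑ m : Mon n k, coords u m • MvPolynomial.monomial m.exponent 1 := by
  classical
  have hsub : u.support ⊆ Finset.univ.image (Mon.exponent : Mon n k → _) := fun s hs => by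
    obtain ⟨m, hm⟩ := exists_exponent_eq (mem_symLE.mp hu s (MvPolynomial.mem_support_iff.mp hs))
    exact Finset.mem_image.mpr ⟨m, Finset.mem_univ m, hm⟩
  conv_lhs => rw [u.as_sum]
  rw [Finset.sum_subset hsub fun s _ hs => by simp [MvPolynomial.notMem_support_iff.mp hs],
    Finset.sum_image Mon.exponent_injective.injOn]
  simp [coords, MvPolynomial.smul_monomial]

theorem symMat_eq_coords (g : Matrix (Fin n) (Fin n) ℂ) (m m' : Mon n k) :
    symMat g m m' = coords (linSubst g (MvPolynomial.monomial m'.exponent 1)) m := by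
  rw [MvPolynomial.monomial_eq, map_mul, Finsupp.prod_fintype _ _ fun _ => pow_zero _, map_prod,
    map_one, map_one, one_mul]
  simp only [map_pow, linSubst_X]
  rfl

theorem coords_linSubst (g : Matrix (Fin n) (Fin n) ℂ) {u : MvPolynomial (Fin n) ℂ}
    (hu : u ∈ symLE n k) (m : Mon n k) :
    coords (linSubst g u) m = ∑ m' : Mon n k, symMat g m m' * coords u m' := by
  conv_lhs => rw [eq_sum_monomial_exponent hu]
  simp only [symMat_eq_coords, coords, map_sum, map_smul, MvPolynomial.coeff_sum,
    MvPolynomial.coeff_smul, smul_eq_mul, mul_comm]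

theorem symMat_mul (g h : Matrix (Fin n) (Fin n) ℂ) (m m' : Mon n k) :
    symMat (g * h) m m' = ∑ m'' : Mon n k, symMat g m m'' * symMat h m'' m' := by
  have hmem : linSubst h (MvPolynomial.monomial m'.exponent 1) ∈ symLE n k :=
    mem_symLE_of_isHomogeneous
      (isHomogeneous_linSubst h (MvPolynomial.isHomogeneous_monomial 1 m'.degree_exponent))
      m'.2.1 m'.2.2
  simp only [symMat_eq_coords h, ← coords_linSubst g hmem, symMat_eq_coords (g * h), linSubst_mul,
    AlgHom.comp_apply]

theorem symMat_diagonal [DecidableEq (Mon n k)] (t : Fin n → ℂ) (m m' : Mon n k) :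
    symMat (Matrix.diagonal t) m m' = if m = m' then ∏ i, t i ^ m.1 i else 0 := by
  have hprod : ∏ i, (∑ j, Matrix.diagonal t j i • MvPolynomial.X j) ^ m'.1 i =
      MvPolynomial.monomial m'.exponent (∏ i, t i ^ m'.1 i) := by
    rw [MvPolynomial.monomial_eq, Finsupp.prod_fintype _ _ fun _ => pow_zero _, map_prod,
      ← Finset.prod_mul_distrib]
    simp [Matrix.diagonal_apply, MvPolynomial.smul_eq_C_mul, mul_pow, Mon.exponent]
  change MvPolynomial.coeff m.exponent _ = _
  rw [hprod, MvPolynomial.coeff_monomial]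
  simp only [Mon.exponent_injective.eq_iff]
  by_cases h : m = m'
  · simp [h]
  · simp [h, Ne.symm h]

end Coordinates

section Action

variable {k a b : ℕ}

/-- The index set of the coordinates of `Wab k a b`. -/
abbrev TensorIndex (k a b : ℕ) : Type := (Fin a → Fin k → Mon k k) × (Fin b → Fin k)

/-- The matrix of `actab g` in the coordinates of `Wab k a b`. -/
noncomputable def actMat (a b : ℕ) (g : Matrix (Fin k) (Fin k) ℂ) :
    Matrix (TensorIndex k a b) (TensorIndex k a b) ℂ :=
  fun x y => (∏ i, ∏ l, symMat g (x.1 i l) (y.1 i l)) * ∏ j, g (x.2 j) (y.2 j)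

/-- The weight of a coordinate of `Wab k a b` under the diagonal torus: the exponent with which
each `e_i` occurs in the corresponding basis tensor. -/
def torusWeight (x : TensorIndex k a b) (i : Fin k) : ℕ :=
  ∑ r, ∑ l, (x.1 r l).1 i + ∑ j, if x.2 j = i then 1 else 0

/-- The decomposable tensor `(c₁ ∧ ⋯ ∧ c_k)^{⊗a} ⊗ v^{⊗b}`. -/
noncomputable def tens (a b : ℕ) (c : Fin k → Mon k k → ℂ) (v : Fin k → ℂ) : Wab k a b :=
  fun x => (∏ i, wedge c (x.1 i)) * ∏ j, v (x.2 j)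

theorem actab_eq_mulVec (g : Matrix (Fin k) (Fin k) ℂ) (T : Wab k a b) :
    actab g T = (actMat a b g).mulVec T := rfl

theorem actMat_mul (g h : Matrix (Fin k) (Fin k) ℂ) :
    actMat a b (g * h) = actMat a b g * actMat a b h := by
  ext x z
  simp only [actMat, symMat_mul, Matrix.mul_apply, Fintype.prod_sum, Finset.sum_mul_sum,
    Fintype.sum_prod_type, Finset.prod_mul_distrib, mul_mul_mul_comm]

theorem prod_pow_torusWeight (t : Fin k → ℂ) (x : TensorIndex k a b) :
    ∏ i, t i ^ torusWeight x i = (∏ r, ∏ l, ∏ i, t i ^ (x.1 r l).1 i) * ∏ j, t (x.2 j) := by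
  simp only [torusWeight, pow_add, Finset.prod_mul_distrib, ← Finset.prod_pow_eq_pow_sum]
  congr 1
  · rw [Finset.prod_comm]
    exact Finset.prod_congr rfl fun r _ => Finset.prod_comm
  · rw [Finset.prod_comm]
    simp [pow_ite]

theorem actab_mul (g h : Matrix (Fin k) (Fin k) ℂ) (T : Wab k a b) :
    actab (g * h) T = actab g (actab h T) := by
  simp only [actab_eq_mulVec, actMat_mul, Matrix.mulVec_mulVec]

theorem actab_diagonal (t : Fin k → ℂ) (T : Wab k a b) (x : TensorIndex k a b) :
    actab (Matrix.diagonal t) T x = (∏ i, t i ^ torusWeight x i) * T x := by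
  classical
  have hkernel (y : TensorIndex k a b) : actMat a b (Matrix.diagonal t) x y =
      if x = y then ∏ i, t i ^ torusWeight x i else 0 := by
    simp only [actMat, symMat_diagonal, Matrix.diagonal_apply, Finset.prod_ite_zero,
      ite_zero_mul_ite_zero, prod_pow_torusWeight, Prod.ext_iff, funext_iff, Finset.mem_univ,
      true_imp_iff]
  simp [actab_eq_mulVec, Matrix.mulVec, dotProduct, hkernel]

theorem actab_one (T : Wab k a b) : actab 1 T = T := by
  funext x
  rw [← Matrix.diagonal_one, actab_diagonal]
  simp

theorem dimH_stabSet_le_dimH_stabSet_actab {g h : Matrix (Fin k) (Fin k) ℂ} (hhg : h * g = 1)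
    (x : Wab k a b) : dimH (stabSet x) ≤ dimH (stabSet (actab g x)) := by
  have hgh : g * h = 1 := mul_eq_one_comm.mp hhg
  let conj : (Fin k → Fin k → ℂ) →ₗ[ℂ] (Fin k → Fin k → ℂ) :=
    (Matrix.ofLinearEquiv ℂ).symm.toLinearMap ∘ₗ LinearMap.mulRight ℂ g ∘ₗ LinearMap.mulLeft ℂ h ∘ₗ
      (Matrix.ofLinearEquiv ℂ).toLinearMap
  have hsub : stabSet x ⊆ conj.toContinuousLinearMap '' stabSet (actab g x) := by
    rintro A ⟨hdet, hA⟩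
    refine ⟨g * Matrix.of A * h, ⟨?_, ?_⟩, ?_⟩
    · change (g * Matrix.of A * h).det = 1
      rw [Matrix.det_mul_right_comm, hgh, one_mul, hdet]
    · change actab (g * Matrix.of A * h) (actab g x) = actab g x
      rw [← actab_mul, mul_assoc, hhg, mul_one, actab_mul, hA]
    · change h * (g * Matrix.of A * h) * g = Matrix.of A
      simp only [mul_assoc, hhg, mul_one]
      rw [← mul_assoc, hhg, one_mul]
  exact (dimH_mono hsub).trans (conj.toContinuousLinearMap.lipschitz.dimH_image_le _)

theorem actV_wedge (g : Matrix (Fin k) (Fin k) ℂ) (c : Fin k → Mon k k → ℂ) :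
    actV g (wedge c) = wedge fun j m => ∑ m', symMat g m m' * c j m' := by
  funext mf
  simp only [actV, wedge, Finset.mul_sum, Fintype.prod_sum]
  rw [Finset.sum_comm]
  refine Finset.sum_congr rfl fun σ _ => Finset.sum_congr rfl fun mf' _ => ?_
  rw [Finset.prod_mul_distrib, mul_left_comm]

theorem actab_tens (g : Matrix (Fin k) (Fin k) ℂ) (c : Fin k → Mon k k → ℂ) (v : Fin k → ℂ) :
    actab g (tens a b c v) =
      tens a b (fun j m => ∑ m', symMat g m m' * c j m') (g.mulVec v) := by
  funext x
  simp only [tens, ← actV_wedge]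
  simp only [actab, actV, tens, Matrix.mulVec, dotProduct, Fintype.prod_sum, Finset.sum_mul_sum,
    Fintype.sum_prod_type, Finset.prod_mul_distrib, mul_mul_mul_comm]

theorem actab_tens_coords (g : Matrix (Fin k) (Fin k) ℂ) {u : Fin k → MvPolynomial (Fin k) ℂ}
    (hu : ∀ j, u j ∈ symLE k k) (v : Fin k → ℂ) :
    actab g (tens a b (fun j => coords (u j)) v) =
      tens a b (fun j => coords (linSubst g (u j))) (g.mulVec v) := by
  rw [actab_tens]
  congr 1
  funext j m
  rw [coords_linSubst g (hu j)]

theorem wedge_eq_det (c : Fin k → Mon k k → ℂ) (mf : Fin k → Mon k k) :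
    wedge c mf = (Matrix.of fun j i => c j (mf i)).det := by
  rw [Matrix.det_apply]
  simp [wedge, Units.smul_def]

theorem wedge_sum_mul (N : Matrix (Fin k) (Fin k) ℂ) (c : Fin k → Mon k k → ℂ) :
    wedge (fun j m => ∑ i, N i j * c i m) = N.det • wedge c := by
  funext mf
  rw [Pi.smul_apply, wedge_eq_det, wedge_eq_det, smul_eq_mul, ← Matrix.det_transpose N,
    ← Matrix.det_mul]
  rfl

theorem tens_sum_mul (N : Matrix (Fin k) (Fin k) ℂ) (γ : ℂ) (c : Fin k → Mon k k → ℂ)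
    (v : Fin k → ℂ) :
    tens a b (fun j m => ∑ i, N i j * c i m) (γ • v) = (N.det ^ a * γ ^ b) • tens a b c v := by
  funext x
  simp only [tens, wedge_sum_mul, Pi.smul_apply, smul_eq_mul, Finset.prod_mul_distrib,
    Finset.prod_const, Finset.card_univ, Fintype.card_fin, mul_mul_mul_comm]

end Action

section LieStabiliser

variable {k a b : ℕ}

/-- The traceless matrices stabilising, up to scalars which cancel in the tensor product, both
the span of the family `w` and the line through `v`. They lie in the Lie algebra of the stabiliser
of `(w₁ ∧ ⋯ ∧ w_k)^{⊗a} ⊗ v^{⊗b}`. -/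
noncomputable def lieStab (a b : ℕ) (w : Fin k → MvPolynomial (Fin k) ℂ) (v : Fin k → ℂ) :
    Submodule ℂ (Matrix (Fin k) (Fin k) ℂ) where
  carrier := {A | A.trace = 0 ∧ ∃ (N : Matrix (Fin k) (Fin k) ℂ) (γ : ℂ),
    (∀ j, linDer A (w j) = ∑ i, N i j • w i) ∧ A.mulVec v = γ • v ∧ a * N.trace + b * γ = 0}
  zero_mem' := ⟨by simp, 0, 0, by simp, by simp, by simp⟩
  add_mem' := by
    rintro A B ⟨hA, N, γ, hN, hγ, htr⟩ ⟨hB, N', γ', hN', hγ', htr'⟩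
    refine ⟨by simp [hA, hB], N + N', γ + γ', fun j => ?_, ?_, ?_⟩
    · simp [hN, hN', add_smul, Finset.sum_add_distrib]
    · rw [Matrix.add_mulVec, hγ, hγ', add_smul]
    · rw [Matrix.trace_add]
      linear_combination htr + htr'
  smul_mem' := by
    rintro c A ⟨hA, N, γ, hN, hγ, htr⟩
    refine ⟨by simp [hA], c • N, c * γ, fun j => ?_, ?_, ?_⟩
    · simp [hN, Finset.smul_sum, mul_smul]
    · rw [Matrix.smul_mulVec, hγ, mul_smul]
    · rw [Matrix.trace_smul, smul_eq_mul]
      linear_combination c * htr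

theorem two_mul_finrank_lieStab_le_dimH {w : Fin k → MvPolynomial (Fin k) ℂ}
    (hw : ∀ j, w j ∈ symLE k k) (v : Fin k → ℂ) :
    (2 * Module.finrank ℂ (lieStab a b w v) : ℕ) ≤
      dimH (stabSet (tens a b (fun j => coords (w j)) v)) := by
  refine two_mul_finrank_le_dimH_of_exp _ ?_
  rintro A ⟨hA, N, γ, hN, hγ, htr⟩
  refine ⟨Matrix.of.symm (NormedSpace.exp A), ⟨?_, ?_⟩, rfl⟩
  · rw [Equiv.apply_symm_apply, det_exp, hA, Complex.exp_zero]
  · have hlin : (fun j => (coords (linSubst (NormedSpace.exp A) (w j)) : Mon k k → ℂ)) =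
        fun j m => ∑ i, NormedSpace.exp N i j * coords (w i) m := by
      funext j m
      simp [linSubst_exp A w N hN, coords, MvPolynomial.coeff_sum]
    rw [Equiv.apply_symm_apply, actab_tens_coords _ hw, hlin, exp_mulVec_of_mulVec_eq_smul hγ,
      tens_sum_mul, det_exp, ← Complex.exp_nat_mul, ← Complex.exp_nat_mul, ← Complex.exp_add, htr,
      Complex.exp_zero, one_smul]

theorem two_mul_le_dimH_stabSet_zero {d : ℕ} (hd : d + 1 ≤ k * k) :
    ((2 * d : ℕ) : ℝ≥0∞) ≤ dimH (stabSet (0 : Wab k a b)) := by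
  have hfinrank : d ≤ Module.finrank ℂ (LinearMap.ker (Matrix.traceLinearMap (Fin k) ℂ ℂ)) := by
    have hsum := (Matrix.traceLinearMap (Fin k) ℂ ℂ).finrank_range_add_finrank_ker
    have hrange := Submodule.finrank_le (LinearMap.range (Matrix.traceLinearMap (Fin k) ℂ ℂ))
    simp only [Module.finrank_matrix, Fintype.card_fin, Module.finrank_self, mul_one] at hsum hrange
    lia
  refine le_trans (by gcongr) (two_mul_finrank_le_dimH_of_exp
    (LinearMap.ker (Matrix.traceLinearMap (Fin k) ℂ ℂ)) fun A hA => ?_)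
  refine ⟨Matrix.of.symm (NormedSpace.exp A), ⟨?_, ?_⟩, rfl⟩
  · rw [Equiv.apply_symm_apply, det_exp, show A.trace = 0 from hA, Complex.exp_zero]
  · simp [actab_eq_mulVec]

end LieStabiliser

section JetPolynomials

open Finset.HasAntidiagonal (antidiagonal mem_antidiagonal)

variable {k : ℕ}

/-- The basis vector `e_n` of `ℂ^k` as a polynomial variable, indexed from `1` as in the paper; it
is `0` unless `1 ≤ n ≤ k`. -/
noncomputable def jetVar (k n : ℕ) : MvPolynomial (Fin k) ℂ :=
  ∑ i : Fin k, if (i : ℕ) + 1 = n then MvPolynomial.X i else 0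

/-- The generating polynomial `∑ e_n Tⁿ` of the basis vectors. -/
noncomputable def jetSeries (k : ℕ) : Polynomial (MvPolynomial (Fin k) ℂ) :=
  ∑ i : Fin k, Polynomial.monomial ((i : ℕ) + 1) (MvPolynomial.X i)

/-- The `n`-th wedge factor `∑_{i₁+⋯+i_s=n} e_{i₁}⋯e_{i_s}` of `p_k`, for `n ≤ k`. -/
noncomputable def jetPoly (k n : ℕ) : MvPolynomial (Fin k) ℂ :=
  (∑ l ∈ Finset.range k, jetSeries k ^ (l + 1)).coeff n

/-- The weight on `Fin k` which gives `e_n` the weight `L n`. -/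
def indexWeight {M : Type*} (k : ℕ) (L : ℕ → M) : Fin k → M := fun i => L (i + 1)

/-- The weight of the monomial with a given exponent vector when `e_n` has weight `L n`. -/
noncomputable abbrev monWeight {M : Type*} [AddCommMonoid M] (k : ℕ) (L : ℕ → M) :
    (Fin k →₀ ℕ) →+ M :=
  Finsupp.weight (indexWeight k L)

theorem jetVar_succ (i : Fin k) : jetVar k (i + 1) = MvPolynomial.X i := by
  simp [jetVar, Fin.val_inj]

theorem jetVar_zero : jetVar k 0 = 0 := by simp [jetVar]

theorem jetVar_eq_zero_or (k n : ℕ) : jetVar k n = 0 ∨ ∃ i : Fin k, n = i + 1 := by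
  by_cases h : ∃ i : Fin k, n = i + 1
  · exact Or.inr h
  · refine Or.inl (Finset.sum_eq_zero fun i _ => if_neg fun hi => h ⟨i, hi.symm⟩)

theorem coeff_jetSeries (n : ℕ) : (jetSeries k).coeff n = jetVar k n := by
  simp [jetSeries, jetVar, Polynomial.coeff_monomial]

theorem colPoly_one (j : Fin k) : colPoly 1 j = jetPoly k (j + 1) := by
  rw [jetPoly, ← Fin.sum_univ_eq_sum_range (fun l => jetSeries k ^ (l + 1)),
    Polynomial.finsetSum_coeff]
  refine Finset.sum_congr rfl fun l _ => ?_
  simp only [jetSeries, Fintype.sum_pow, Polynomial.finsetSum_coeff,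
    ← Polynomial.C_mul_X_pow_eq_monomial, Finset.prod_mul_distrib, Finset.prod_pow_eq_pow_sum,
    ← map_prod, Polynomial.coeff_C_mul_X_pow, Matrix.one_apply, ite_smul, one_smul, zero_smul,
    Finset.sum_ite_eq', Finset.mem_univ, if_true, eq_comm]

theorem jetPoly_zero : jetPoly k 0 = 0 := by
  simp [jetPoly, Polynomial.coeff_zero_eq_eval_zero, jetSeries, Polynomial.eval_finsetSum]

theorem jetPoly_eq {n : ℕ} (hn : n ≤ k) :
    jetPoly k n = jetVar k n +
      ∑ pq ∈ antidiagonal n, jetVar k pq.1 * jetPoly k pq.2 := by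
  have hgeom : ∑ l ∈ Finset.range k, jetSeries k ^ (l + 1) + jetSeries k ^ (k + 1) =
      jetSeries k + jetSeries k * ∑ l ∈ Finset.range k, jetSeries k ^ (l + 1) := by
    rw [← Finset.sum_range_succ, Finset.sum_range_succ', Finset.mul_sum, add_comm]
    simp [pow_succ']
  have hpow : (jetSeries k ^ (k + 1)).coeff n = 0 :=
    Polynomial.X_pow_dvd_iff.mp (pow_dvd_pow_of_dvd (Polynomial.X_dvd_iff.mpr
      (by rw [coeff_jetSeries, jetVar_zero])) _) n (by lia)
  have hcoeff := congrArg (Polynomial.coeff · n) hgeom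
  simpa only [jetPoly, Polynomial.coeff_add, hpow, add_zero, coeff_jetSeries, Polynomial.coeff_mul]
    using hcoeff

theorem isWeightedHomogeneous_jetVar {M : Type*} [AddCommMonoid M] (L : ℕ → M) (n : ℕ) :
    (jetVar k n).IsWeightedHomogeneous (indexWeight k L) (L n) := by
  obtain h | ⟨i, rfl⟩ := jetVar_eq_zero_or k n
  · exact h ▸ MvPolynomial.isWeightedHomogeneous_zero _ _ _
  · exact jetVar_succ i ▸ MvPolynomial.isWeightedHomogeneous_X _ _ i

theorem isWeightedHomogeneous_jetPoly {n : ℕ} (hn : n ≤ k) :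
    (jetPoly k n).IsWeightedHomogeneous (indexWeight k id) n := by
  induction n using Nat.strong_induction_on with | _ n ih =>
  rw [jetPoly_eq hn]
  refine (isWeightedHomogeneous_jetVar id n).add (MvPolynomial.IsWeightedHomogeneous.sum _ _ n ?_)
  rintro ⟨p, q⟩ hpq
  obtain rfl : p + q = n := mem_antidiagonal.mp hpq
  obtain h | ⟨i, rfl⟩ := jetVar_eq_zero_or k p
  · simpa [h] using MvPolynomial.isWeightedHomogeneous_zero _ _ _
  · exact (isWeightedHomogeneous_jetVar id _).mul (ih q (by lia) (by lia))

theorem degree_le_monWeight_id (m : Fin k →₀ ℕ) :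
    m.degree ≤ monWeight k id m := by
  rw [Finsupp.degree_eq_sum, Finsupp.weight_eq_sum]
  exact Finset.sum_le_sum fun i _ => Nat.le_mul_of_pos_right _ i.1.succ_pos

theorem mem_symLE_of_isWeightedHomogeneous {u : MvPolynomial (Fin k) ℂ} {n : ℕ}
    (hu : u.IsWeightedHomogeneous (indexWeight k id) n) (hn : 0 < n) (hnk : n ≤ k) :
    u ∈ symLE k k := by
  refine mem_symLE.mpr fun s hs => ?_
  have hweight := hu hs
  refine ⟨Nat.pos_of_ne_zero fun h0 => ?_,
    (degree_le_monWeight_id s).trans (hweight.le.trans hnk)⟩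
  rw [(Finsupp.degree_eq_zero_iff _).mp h0, map_zero] at hweight
  lia

end JetPolynomials

section InitialForms

open Finset.HasAntidiagonal (antidiagonal mem_antidiagonal)

variable {k : ℕ}

theorem weightedHomogeneousComponent_add_X_mul {σ R M : Type*} [CommSemiring R]
    [AddCommMonoid M] [IsCancelAdd M] (w : σ → M) (c : M) (i : σ) (p : MvPolynomial σ R) :
    MvPolynomial.weightedHomogeneousComponent w (w i + c) (MvPolynomial.X i * p) =
      MvPolynomial.X i * MvPolynomial.weightedHomogeneousComponent w c p := by
  classical
  ext s
  simp only [MvPolynomial.coeff_weightedHomogeneousComponent, MvPolynomial.coeff_X_mul']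
  by_cases hi : i ∈ s.support
  · rw [if_pos hi, if_pos hi, ← Finsupp.weight_sub_single_add (Finsupp.mem_support_iff.mp hi),
      add_comm, add_left_cancel_iff]
  · simp [hi]

/-- The least weight of a monomial of index weight `n`, when `e_i` has weight `L i`. For `n ≤ k`
these are the monomials of `jetPoly k n`. -/
noncomputable def minWeight (k : ℕ) (L : ℕ → ℝ) (n : ℕ) : ℝ :=
  sInf (monWeight k L '' {m | monWeight k id m = n})

/-- The part of least weight of `jetPoly k n`, when `e_i` has weight `L i`. -/
noncomputable def initialForm (k : ℕ) (L : ℕ → ℝ) (n : ℕ) : MvPolynomial (Fin k) ℂ :=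
  MvPolynomial.weightedHomogeneousComponent (indexWeight k L) (minWeight k L n) (jetPoly k n)

theorem finite_setOf_monWeight_id_eq (k n : ℕ) :
    {m | monWeight k id m = n}.Finite :=
  Finsupp.finite_of_nat_weight_eq _ (fun i => i.1.succ_ne_zero) n

variable (L : ℕ → ℝ)

theorem minWeight_le_monWeight (m : Fin k →₀ ℕ) :
    minWeight k L (monWeight k id m) ≤ monWeight k L m :=
  csInf_le ((finite_setOf_monWeight_id_eq k _).image _).bddBelow ⟨m, rfl, rfl⟩

theorem exists_monWeight_eq_minWeight [NeZero k] (n : ℕ) :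
    ∃ m, monWeight k id m = n ∧
      monWeight k L m = minWeight k L n :=
  have hne : Finsupp.single 0 n ∈ {m | monWeight k id m = n} := by
    simp [Finsupp.weight_single, indexWeight]
  Set.Nonempty.csInf_mem (Set.Nonempty.image _ ⟨_, hne⟩)
    ((finite_setOf_monWeight_id_eq k n).image _)

theorem minWeight_zero [NeZero k] : minWeight k L 0 = 0 := by
  obtain ⟨m, hm, hL⟩ := exists_monWeight_eq_minWeight (k := k) L 0
  have hdeg : m.degree = 0 := Nat.le_zero.mp (hm ▸ degree_le_monWeight_id m)
  rw [← hL, (Finsupp.degree_eq_zero_iff _).mp hdeg, map_zero]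

theorem monWeight_sub_single {M : Type*} [AddCommMonoid M] {i : Fin k} {m : Fin k →₀ ℕ}
    (hi : m i ≠ 0) (L : ℕ → M) :
    monWeight k L (m - Finsupp.single i 1) + L (i + 1) = monWeight k L m :=
  Finsupp.weight_sub_single_add hi

theorem monWeight_single {M : Type*} [AddCommMonoid M] (L : ℕ → M) (i : Fin k) :
    monWeight k L (Finsupp.single i 1) = L (i + 1) := by
  simp [Finsupp.weight_single, indexWeight]

theorem minWeight_succ_le (i : Fin k) : minWeight k L (i + 1) ≤ L (i + 1) := by
  have hle := minWeight_le_monWeight L (Finsupp.single i 1)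
  rwa [monWeight_single, monWeight_single] at hle

theorem minWeight_add_le [NeZero k] (p q : ℕ) :
    minWeight k L (p + q) ≤ minWeight k L p + minWeight k L q := by
  obtain ⟨m, rfl, hp⟩ := exists_monWeight_eq_minWeight (k := k) L p
  obtain ⟨m', rfl, hq⟩ := exists_monWeight_eq_minWeight (k := k) L q
  have hle := minWeight_le_monWeight L (m + m')
  rwa [map_add, map_add, hp, hq] at hle

theorem minWeight_add_succ_le [NeZero k] (i : Fin k) (q : ℕ) :
    minWeight k L (i + 1 + q) ≤ L (i + 1) + minWeight k L q :=
  (minWeight_add_le L _ q).trans (by gcongr; exact minWeight_succ_le L i)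

theorem eq_minWeight_of_add_eq [NeZero k] {i : Fin k} {q : ℕ}
    (h : L (i + 1) + minWeight k L q = minWeight k L (i + 1 + q)) :
    L (i + 1) = minWeight k L (i + 1) := by
  linarith [minWeight_add_le (k := k) L (i + 1) q, minWeight_succ_le L i]

theorem exists_minWeight_eq_add [NeZero k] {n : ℕ} (hn : 0 < n) :
    ∃ (i : Fin k) (q : ℕ), n = i + 1 + q ∧ minWeight k L n = L (i + 1) + minWeight k L q := by
  obtain ⟨m, hm, hL⟩ := exists_monWeight_eq_minWeight (k := k) L n
  have hm0 : m ≠ 0 := by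
    rintro rfl
    simp [hn.ne] at hm
  obtain ⟨i, hi⟩ := Finsupp.ne_iff.mp hm0
  have hid := monWeight_sub_single hi id
  have hsplit := monWeight_sub_single hi L
  obtain rfl : n = i + 1 + monWeight k id (m - Finsupp.single i 1) := by
    rw [← hm, ← hid, id_eq, add_comm]
  refine ⟨i, _, rfl, (minWeight_add_succ_le L i _).antisymm ?_⟩
  linarith [minWeight_le_monWeight L (m - Finsupp.single i 1)]

theorem minWeight_one [NeZero k] : minWeight k L 1 = L 1 := by
  obtain ⟨i, q, hiq, hw⟩ := exists_minWeight_eq_add (k := k) L one_pos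
  obtain ⟨hi, rfl⟩ : (i : ℕ) = 0 ∧ q = 0 := by lia
  rw [hw, hi, minWeight_zero, add_zero, zero_add]

theorem initialForm_zero : initialForm k L 0 = 0 := by
  rw [initialForm, jetPoly_zero, map_zero]

theorem weightedHomogeneousComponent_jetPoly_of_lt {n : ℕ} (hn : n ≤ k) {c : ℝ}
    (hc : c < minWeight k L n) :
    MvPolynomial.weightedHomogeneousComponent (indexWeight k L) c (jetPoly k n) = 0 := by
  refine MvPolynomial.weightedHomogeneousComponent_eq_zero' _ _ fun m hm hmc => ?_
  obtain rfl := isWeightedHomogeneous_jetPoly hn (MvPolynomial.mem_support_iff.mp hm)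
  exact (minWeight_le_monWeight L m).not_gt (hmc ▸ hc)

theorem initialForm_eq [NeZero k] {n : ℕ} (hn : n ≤ k) :
    initialForm k L n = (if L n = minWeight k L n then jetVar k n else 0) +
      ∑ pq ∈ antidiagonal n, if L pq.1 + minWeight k L pq.2 = minWeight k L n then
        jetVar k pq.1 * initialForm k L pq.2 else 0 := by
  rw [initialForm, jetPoly_eq hn, map_add, map_sum]
  congr 1
  · split_ifs with h
    · exact (h ▸ isWeightedHomogeneous_jetVar L n).weightedHomogeneousComponent_same
    · exact (isWeightedHomogeneous_jetVar L n).weightedHomogeneousComponent_ne _ (Ne.symm h)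
  · refine Finset.sum_congr rfl ?_
    rintro ⟨p, q⟩ hpq
    obtain rfl : p + q = n := mem_antidiagonal.mp hpq
    obtain h | ⟨i, rfl⟩ := jetVar_eq_zero_or k p
    · simp [h]
    have hsplit : minWeight k L (i + 1 + q) =
        indexWeight k L i + (minWeight k L (i + 1 + q) - L (i + 1)) := by
      simp [indexWeight]
    rw [jetVar_succ, hsplit, weightedHomogeneousComponent_add_X_mul, ← hsplit]
    split_ifs with h
    · rw [← h, add_sub_cancel_left, initialForm]
    · rw [weightedHomogeneousComponent_jetPoly_of_lt L (by lia), mul_zero]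
      have hle := minWeight_add_succ_le L i q
      grind

open scoped ComplexOrder in
theorem eval_one_initialForm_pos [NeZero k] {n : ℕ} (hn : 0 < n) (hnk : n ≤ k) :
    0 < MvPolynomial.eval 1 (initialForm k L n) := by
  induction n using Nat.strong_induction_on with | _ n ih =>
  have hvar (p : ℕ) : 0 ≤ MvPolynomial.eval 1 (jetVar k p) := by
    obtain h | ⟨i, rfl⟩ := jetVar_eq_zero_or k p
    · simp [h]
    · simp [jetVar_succ]
  have hsum : ∀ pq ∈ antidiagonal n, 0 ≤ MvPolynomial.eval 1
      (if L pq.1 + minWeight k L pq.2 = minWeight k L n then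
        jetVar k pq.1 * initialForm k L pq.2 else 0) := by
    rintro ⟨p, q⟩ hpq
    obtain rfl : p + q = n := mem_antidiagonal.mp hpq
    obtain rfl | hp := p.eq_zero_or_pos
    · simp [jetVar_zero]
    obtain rfl | hq := q.eq_zero_or_pos
    · simp [initialForm_zero]
    split_ifs
    · rw [map_mul]
      exact mul_nonneg (hvar p) (ih q (by lia) hq (by lia)).le
    · rw [map_zero]
  rw [initialForm_eq L hnk, map_add, map_sum]
  obtain ⟨i, q, rfl, hw⟩ := exists_minWeight_eq_add (k := k) L hn
  obtain rfl | hq := q.eq_zero_or_pos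
  · rw [minWeight_zero, add_zero] at hw
    refine add_pos_of_pos_of_nonneg ?_ (Finset.sum_nonneg hsum)
    simp [hw, jetVar_succ]
  · refine add_pos_of_nonneg_of_pos ?_ (Finset.sum_pos' hsum ⟨(i + 1, q), by simp, ?_⟩)
    · split_ifs
      · exact hvar _
      · rw [map_zero]
    · simpa [hw, jetVar_succ] using ih q (by lia) hq (by lia)

theorem initialForm_ne_zero [NeZero k] {n : ℕ} (hn : 0 < n) (hnk : n ≤ k) :
    initialForm k L n ≠ 0 := by
  intro h
  simpa [h] using eval_one_initialForm_pos L hn hnk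

theorem isWeightedHomogeneous_id_initialForm {n : ℕ} (hn : n ≤ k) :
    (initialForm k L n).IsWeightedHomogeneous (indexWeight k id) n := by
  intro m hm
  refine isWeightedHomogeneous_jetPoly hn fun h => hm ?_
  classical
  rw [initialForm, MvPolynomial.coeff_weightedHomogeneousComponent, h, ite_self]

theorem initialForm_mem_symLE {n : ℕ} (hn : 0 < n) (hnk : n ≤ k) :
    initialForm k L n ∈ symLE k k :=
  mem_symLE_of_isWeightedHomogeneous (isWeightedHomogeneous_id_initialForm L hnk) hn hnk

end InitialForms

section Derivations

open Finset.HasAntidiagonal (antidiagonal mem_antidiagonal)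

variable {k : ℕ} {L : ℕ → ℝ}

theorem derivation_initialForm_eq [NeZero k]
    (D : Derivation ℂ (MvPolynomial (Fin k) ℂ) (MvPolynomial (Fin k) ℂ))
    {F : ℕ → MvPolynomial (Fin k) ℂ}
    (hF : ∀ n ≤ k, F n = (if L n = minWeight k L n then D (jetVar k n) else 0) +
      ∑ pq ∈ antidiagonal n, if L pq.1 + minWeight k L pq.2 = minWeight k L n then
        D (jetVar k pq.1) * initialForm k L pq.2 + jetVar k pq.1 * F pq.2 else 0)
    {n : ℕ} (hn : n ≤ k) : D (initialForm k L n) = F n := by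
  induction n using Nat.strong_induction_on with | _ n ih =>
  rw [initialForm_eq L hn, hF n hn, map_add, map_sum]
  congr 1
  · rw [apply_ite D, map_zero]
  · refine Finset.sum_congr rfl ?_
    rintro ⟨p, q⟩ hpq
    obtain rfl : p + q = n := mem_antidiagonal.mp hpq
    rw [apply_ite D, map_zero, Derivation.leibniz, smul_eq_mul, smul_eq_mul,
      add_comm (jetVar k p * _), mul_comm (initialForm k L q)]
    obtain rfl | hp := p.eq_zero_or_pos
    · simp [jetVar_zero]
    · rw [ih q (by lia) (by lia)]

theorem derivation_initialForm_eq_zero [NeZero k]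
    (D : Derivation ℂ (MvPolynomial (Fin k) ℂ) (MvPolynomial (Fin k) ℂ)) {j : ℕ}
    (hj : L j ≠ minWeight k L j) (hD : ∀ n, n ≠ j → D (jetVar k n) = 0) {n : ℕ} (hn : n ≤ k) :
    D (initialForm k L n) = 0 := by
  refine derivation_initialForm_eq D (F := 0) (fun n _ => ?_) hn
  rw [Finset.sum_eq_zero, add_zero, Pi.zero_apply, eq_comm, ite_eq_right_iff]
  · exact fun h => hD n fun hnj => hj (hnj ▸ h)
  · rintro ⟨p, q⟩ hpq
    obtain rfl : p + q = n := mem_antidiagonal.mp hpq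
    obtain h | ⟨i, rfl⟩ := jetVar_eq_zero_or k p
    · simp [h]
    simp only [Pi.zero_apply, mul_zero, add_zero, ite_eq_right_iff]
    intro h
    rw [hD _ fun hij => hj (hij ▸ eq_minWeight_of_add_eq L h), zero_mul]

/-- The operator `e_n ↦ c n • e_{n-t}` of `ℂ^k`. -/
def shiftMatrix (k t : ℕ) (c : ℕ → ℂ) : Matrix (Fin k) (Fin k) ℂ :=
  fun i j => if (i : ℕ) + t = j then c (j + 1) else 0

theorem trace_shiftMatrix {t : ℕ} (ht : 0 < t) (c : ℕ → ℂ) : (shiftMatrix k t c).trace = 0 :=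
  Finset.sum_eq_zero fun i _ => if_neg (by lia)

theorem sum_shiftMatrix_smul (t : ℕ) (c : ℕ → ℂ) {f : ℕ → MvPolynomial (Fin k) ℂ} (hf : f 0 = 0)
    (j : Fin k) : ∑ i, shiftMatrix k t c i j • f (i + 1) = c (j + 1) • f (j + 1 - t) := by
  obtain htj | htj := le_or_gt t j
  · have hdef (i : Fin k) : shiftMatrix k t c i j • f (i + 1) =
        if i = ⟨j - t, by lia⟩ then c (j + 1) • f (j + 1 - t) else 0 := by
      simp only [shiftMatrix, ite_smul, zero_smul, Fin.ext_iff]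
      refine ite_congr (by grind) (fun h => ?_) fun _ => rfl
      rw [h, Nat.sub_add_comm htj]
    simp [hdef]
  · rw [Nat.sub_eq_zero_of_le htj, hf, smul_zero]
    refine Finset.sum_eq_zero fun i _ => ?_
    rw [shiftMatrix, if_neg (by lia), zero_smul]

theorem linDer_shiftMatrix_jetVar (t : ℕ) (c : ℕ → ℂ) {n : ℕ} (hn : n ≤ k) :
    linDer (shiftMatrix k t c) (jetVar k n) = c n • jetVar k (n - t) := by
  obtain rfl | hpos := n.eq_zero_or_pos
  · simp [jetVar_zero]
  obtain ⟨j, rfl⟩ : ∃ j : Fin k, n = j + 1 := ⟨⟨n - 1, by lia⟩, by grind⟩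
  rw [← sum_shiftMatrix_smul t c jetVar_zero j, jetVar_succ, linDer_X]
  simp only [jetVar_succ]

theorem sum_antidiagonal_smul_tsub_mul {R S : Type*} [CommSemiring R] [SMulZeroClass S R]
    (χ : ℕ × ℕ → S) {f : ℕ → R} (hf : f 0 = 0) (g : ℕ → R) (n t : ℕ) :
    ∑ pq ∈ antidiagonal n, χ pq • (f (pq.1 - t) * g pq.2) =
      ∑ pq ∈ antidiagonal (n - t), χ (pq.1 + t, pq.2) • (f pq.1 * g pq.2) := by
  have hzero {p : ℕ} (q : ℕ) (hp : p ≤ t) : f (p - t) * g q = 0 := by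
    rw [Nat.sub_eq_zero_of_le hp, hf, zero_mul]
  obtain hnt | htn := lt_or_ge n t
  · rw [Nat.sub_eq_zero_of_le hnt.le, Finset.sum_eq_zero]
    · simp [hf]
    · intro pq hpq
      rw [hzero _ (by have := mem_antidiagonal.mp hpq; lia), smul_zero]
  · rw [← Finset.sum_filter_of_ne (p := fun pq => t ≤ pq.1) fun pq _ => by
        contrapose!
        exact fun h => by rw [hzero _ h.le, smul_zero],
      Finset.Nat.antidiagonal_filter_le_fst_of_le htn, Finset.sum_map]
    exact Finset.sum_congr rfl fun pq _ => by simp [Prod.map]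

theorem sum_antidiagonal_smul_mul_tsub {R S : Type*} [CommSemiring R] [SMulZeroClass S R]
    (χ : ℕ × ℕ → S) (f : ℕ → R) {g : ℕ → R} (hg : g 0 = 0) (n t : ℕ) :
    ∑ pq ∈ antidiagonal n, χ pq • (f pq.1 * g (pq.2 - t)) =
      ∑ pq ∈ antidiagonal (n - t), χ (pq.1, pq.2 + t) • (f pq.1 * g pq.2) := by
  rw [← Finset.Nat.sum_antidiagonal_swap (n := n),
    ← Finset.Nat.sum_antidiagonal_swap (n := n - t)]
  simpa only [mul_comm, Function.comp_apply, Prod.swap, Prod.fst_swap, Prod.snd_swap] using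
    sum_antidiagonal_smul_tsub_mul (χ ∘ Prod.swap) hg f n t

theorem linDer_shiftMatrix_initialForm [NeZero k] {t : ℕ} {c d : ℕ → ℂ}
    (hlin : ∀ n, 0 < n → n + t ≤ k →
      (if L (n + t) = minWeight k L (n + t) then c (n + t) else 0) =
        if L n = minWeight k L n then d (n + t) else 0)
    (hquad : ∀ p q, 0 < p → 0 < q → p + q + t ≤ k →
      (if L (p + t) + minWeight k L q = minWeight k L (p + q + t) then c (p + t) else 0) +
        (if L p + minWeight k L (q + t) = minWeight k L (p + q + t) then d (q + t) else 0) =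
      if L p + minWeight k L q = minWeight k L (p + q) then d (p + q + t) else 0)
    {n : ℕ} (hn : n ≤ k) :
    linDer (shiftMatrix k t c) (initialForm k L n) = d n • initialForm k L (n - t) := by
  -- `hlin` compares the coefficients of `e_{n-t}`, `hquad` those of `e_p * initialForm k L q`.
  refine derivation_initialForm_eq _ (F := fun n => d n • initialForm k L (n - t))
    (fun n hn => ?_) hn
  have hterm : ∀ pq ∈ antidiagonal n,
      (if L pq.1 + minWeight k L pq.2 = minWeight k L n then
        linDer (shiftMatrix k t c) (jetVar k pq.1) * initialForm k L pq.2 +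
          jetVar k pq.1 * d pq.2 • initialForm k L (pq.2 - t) else 0) =
      (if L pq.1 + minWeight k L pq.2 = minWeight k L n then c pq.1 else 0) •
          (jetVar k (pq.1 - t) * initialForm k L pq.2) +
        (if L pq.1 + minWeight k L pq.2 = minWeight k L n then d pq.2 else 0) •
          (jetVar k pq.1 * initialForm k L (pq.2 - t)) := by
    intro pq hpq
    have hpk : pq.1 ≤ k := by
      have := mem_antidiagonal.mp hpq
      lia
    rw [linDer_shiftMatrix_jetVar t c hpk]
    split_ifs <;> simp
  rw [Finset.sum_congr rfl hterm, Finset.sum_add_distrib,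
    sum_antidiagonal_smul_tsub_mul (fun pq => ite _ (c pq.1) 0) jetVar_zero,
    sum_antidiagonal_smul_mul_tsub (fun pq => ite _ (d pq.2) 0) _ (initialForm_zero L),
    ← Finset.sum_add_distrib, linDer_shiftMatrix_jetVar t c hn]
  obtain hnt | hnt := le_or_gt n t
  · simp [Nat.sub_eq_zero_of_le hnt, initialForm_zero, jetVar_zero]
  obtain ⟨m, rfl, hm⟩ : ∃ m, n = m + t ∧ 0 < m := ⟨n - t, by lia, by lia⟩
  rw [Nat.add_sub_cancel, initialForm_eq L (by lia), smul_add, Finset.smul_sum]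
  congr 1
  · simpa only [smul_ite, ite_smul, smul_zero, zero_smul] using
      congrArg (· • jetVar k m) (hlin m hm hn).symm
  · refine Finset.sum_congr rfl ?_
    rintro ⟨p, q⟩ hpq
    obtain rfl : p + q = m := mem_antidiagonal.mp hpq
    obtain rfl | hp := p.eq_zero_or_pos
    · simp [jetVar_zero]
    obtain rfl | hq := q.eq_zero_or_pos
    · simp [initialForm_zero]
    rw [← add_smul, hquad p q hp hq hn, ite_smul, zero_smul, smul_ite, smul_zero]

end Derivations

theorem linDer_diagonal_of_isWeightedHomogeneous {σ S R : Type*} [Fintype σ] [DecidableEq σ]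
    [CommSemiring S] [CommSemiring R] [Algebra S R] {w : σ → S} {c : S} {p : MvPolynomial σ R}
    (hp : p.IsWeightedHomogeneous w c) :
    linDer (Matrix.diagonal fun i => algebraMap S R (w i)) p = c • p := by
  have hD : linDer (Matrix.diagonal fun i => algebraMap S R (w i)) =
      MvPolynomial.mkDerivation R fun i => w i • MvPolynomial.X i :=
    MvPolynomial.derivation_ext fun i => by
      simp [linDer_X, MvPolynomial.mkDerivation_X, Matrix.diagonal_apply]
  have hmonomial (s : σ →₀ ℕ) (r : R) : MvPolynomial.mkDerivation R
      (fun i => w i • (MvPolynomial.X i : MvPolynomial σ R)) (MvPolynomial.monomial s r) =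
        Finsupp.weight w s • MvPolynomial.monomial s r := by
    rw [MvPolynomial.mkDerivation_monomial, Finsupp.weight_apply, Finsupp.sum, Finsupp.sum,
      Finset.smul_sum, Finset.sum_smul]
    refine Finset.sum_congr rfl fun i hi => ?_
    have hs : s - Finsupp.single i 1 + Finsupp.single i 1 = s :=
      tsub_add_cancel_of_le (by simpa [Nat.one_le_iff_ne_zero] using hi)
    rw [smul_comm _ (w i), smul_comm r (w i), smul_assoc, smul_comm (s i) (w i), smul_eq_mul,
      MvPolynomial.X, MvPolynomial.monomial_mul, hs, mul_one, MvPolynomial.smul_monomial,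
      MvPolynomial.smul_monomial, smul_eq_mul, mul_comm, ← nsmul_eq_mul,
      ← MvPolynomial.smul_monomial (w i), map_nsmul]
  rw [hD, p.as_sum, map_sum, Finset.smul_sum]
  exact Finset.sum_congr rfl fun s hs => by rw [hmonomial, hp (MvPolynomial.mem_support_iff.mp hs)]

theorem card_add_one_le_finrank {n K : Type*} [Fintype n] [DecidableEq n] [Field K]
    {V : Submodule K (Matrix n n K)} {j : n}
    (hcol : ∀ A : Matrix n n K, A j j = 0 → (∀ r s, s ≠ j → A r s = 0) → A ∈ V) {d : n → K}
    (hd : Matrix.diagonal d ∈ V) {i : n} (hdi : d i ≠ 0) {X : Matrix n n K} (hX : X ∈ V)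
    (hdiag : ∀ r, X r r = 0) {p q : n} (hq : q ≠ j) (hpq : X p q ≠ 0) :
    Fintype.card n + 1 ≤ Module.finrank K V := by
  let entry : Option n → n × n
    | none => (p, q)
    | some r => if r = j then (i, i) else (r, j)
  let Φ : Matrix n n K →ₗ[K] Option n → K :=
    LinearMap.pi fun o => Matrix.entryLinearMap K K (entry o).1 (entry o).2
  have hsurj : Function.Surjective (Φ ∘ₗ V.subtype) := by
    intro v
    set x := v none / X p q with hx
    set y := v (some j) / d i with hy
    have hne : p ≠ q := by
      rintro rfl
      exact hpq (hdiag p)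
    refine ⟨⟨x • X + y • Matrix.diagonal d +
      Matrix.of fun r s => if s = j ∧ r ≠ j then v (some r) - x * X r j else 0,
      V.add_mem (V.add_mem (V.smul_mem x hX) (V.smul_mem y hd)) (hcol _ ?_ ?_)⟩, ?_⟩
    · simp
    · intro r s hs
      simp [hs]
    · funext o
      rcases o with - | r
      · simp [Φ, entry, hne, hq, hx, hpq]
      · by_cases hr : r = j
        · simp [Φ, entry, hr, hdiag, hy, hdi]
        · simp [Φ, entry, hr]
  simpa using LinearMap.finrank_le_finrank_of_surjective hsurj

theorem ite_add_ite_of_subadditive {R : Type*} [AddZeroClass R] {M : ℕ → ℝ}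
    (hM : ∀ p q, M (p + q) ≤ M p + M q) {μ : ℕ → R}
    (hμ : ∀ p q, M (p + q) = M p + M q → μ (p + q) = μ p + μ q) (p q : ℕ) :
    (if M (p + 1) + M q = M (p + q + 1) then if M (p + 1) = M p + M 1 then μ p else 0 else 0) +
        (if M p + M (q + 1) = M (p + q + 1) then if M (q + 1) = M q + M 1 then μ q else 0 else 0) =
      if M p + M q = M (p + q) then
        if M (p + q + 1) = M (p + q) + M 1 then μ (p + q) else 0 else 0 := by
  have hp₁ := hM p 1
  have hq₁ := hM q 1
  have hpq := hM p q
  have hpq₁ := hM (p + q) 1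
  have hp₁q : M (p + q + 1) ≤ M (p + 1) + M q := add_right_comm p 1 q ▸ hM (p + 1) q
  have hp_q₁ : M (p + q + 1) ≤ M p + M (q + 1) := hM p (q + 1)
  have hleft : M (p + 1) + M q = M (p + q + 1) ∧ M (p + 1) = M p + M 1 ↔
      M (p + q + 1) = M p + M q + M 1 :=
    ⟨fun h => by linarith, fun h => ⟨by linarith, by linarith⟩⟩
  have hright : M p + M (q + 1) = M (p + q + 1) ∧ M (q + 1) = M q + M 1 ↔
      M (p + q + 1) = M p + M q + M 1 :=
    ⟨fun h => by linarith, fun h => ⟨by linarith, by linarith⟩⟩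
  have hsum : M p + M q = M (p + q) ∧ M (p + q + 1) = M (p + q) + M 1 ↔
      M (p + q + 1) = M p + M q + M 1 :=
    ⟨fun h => by linarith, fun h => ⟨by linarith, by linarith⟩⟩
  simp only [← ite_and, hleft, hright, hsum]
  split_ifs with h
  · rw [hμ p q (by linarith)]
  · rw [add_zero]

section InitialLieStabiliser

variable {k a b : ℕ} [NeZero k] {L : ℕ → ℝ}

/-- The matrices known to be tangent to the stabiliser of the limit
`(W₁ ∧ ⋯ ∧ W_k)^{⊗a} ⊗ e₁^{⊗b}`, where `W_n` is the initial form of the `n`-th factor of `p_k`. -/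
noncomputable abbrev initialLieStab (k a b : ℕ) (L : ℕ → ℝ) :
    Submodule ℂ (Matrix (Fin k) (Fin k) ℂ) :=
  lieStab a b (fun j => initialForm k L (j + 1)) (e1 k)

theorem e1_eq_single : e1 k = Pi.single 0 1 := by
  ext i
  simp only [e1, Pi.single_apply, Fin.val_eq_zero_iff]

theorem diagonal_mem_initialLieStab (hsum : ∑ i : Fin k, L (i + 1) = 0)
    (hab : a * ∑ i : Fin k, minWeight k L (i + 1) + b * L 1 = 0) :
    Matrix.diagonal (fun i : Fin k => (L (i + 1) : ℂ)) ∈ initialLieStab k a b L := by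
  refine ⟨?_, Matrix.diagonal fun i => (minWeight k L (i + 1) : ℂ), L 1, fun j => ?_, ?_, ?_⟩
  · rw [Matrix.trace_diagonal]
    exact_mod_cast hsum
  · have hj := linDer_diagonal_of_isWeightedHomogeneous
      (MvPolynomial.weightedHomogeneousComponent_isWeightedHomogeneous
        (w := indexWeight k L) (minWeight k L (j + 1)) (jetPoly k (j + 1)))
    refine hj.trans ?_
    simp [Matrix.diagonal_apply, initialForm]
  · rw [e1_eq_single, Matrix.mulVec_single_one]
    ext i
    obtain rfl | hi := eq_or_ne i 0 <;> simp [*]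
  · rw [Matrix.trace_diagonal]
    exact_mod_cast hab

theorem mem_initialLieStab_of_column {j : Fin k} (hj : L (j + 1) ≠ minWeight k L (j + 1))
    {A : Matrix (Fin k) (Fin k) ℂ} (hjj : A j j = 0) (hA : ∀ r s, s ≠ j → A r s = 0) :
    A ∈ initialLieStab k a b L := by
  have hj0 : 0 ≠ j := by
    rintro rfl
    exact hj (by simp [minWeight_one])
  refine ⟨?_, 0, 0, fun i => ?_, ?_, by simp⟩
  · refine Finset.sum_eq_zero fun i _ => ?_
    obtain rfl | hi := eq_or_ne i j
    · exact hjj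
    · exact hA i i hi
  · rw [derivation_initialForm_eq_zero _ hj _ i.2]
    · simp
    · intro n hn
      obtain h | ⟨s, rfl⟩ := jetVar_eq_zero_or k n
      · rw [h, map_zero]
      · simp [jetVar_succ, linDer_X, hA _ s (by grind)]
  · rw [e1_eq_single, Matrix.mulVec_single_one, zero_smul]
    exact funext fun i => hA i 0 hj0

theorem shiftMatrix_mem_initialLieStab {t : ℕ} (ht : 0 < t) {c d : ℕ → ℂ}
    (hlin : ∀ n, 0 < n → n + t ≤ k →
      (if L (n + t) = minWeight k L (n + t) then c (n + t) else 0) =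
        if L n = minWeight k L n then d (n + t) else 0)
    (hquad : ∀ p q, 0 < p → 0 < q → p + q + t ≤ k →
      (if L (p + t) + minWeight k L q = minWeight k L (p + q + t) then c (p + t) else 0) +
        (if L p + minWeight k L (q + t) = minWeight k L (p + q + t) then d (q + t) else 0) =
      if L p + minWeight k L q = minWeight k L (p + q) then d (p + q + t) else 0) :
    shiftMatrix k t c ∈ initialLieStab k a b L := by
  refine ⟨trace_shiftMatrix ht c, shiftMatrix k t d, 0, fun j => ?_, ?_, ?_⟩
  · rw [linDer_shiftMatrix_initialForm hlin hquad j.2,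
      sum_shiftMatrix_smul t d (initialForm_zero L) j]
  · rw [e1_eq_single, Matrix.mulVec_single_one, zero_smul]
    exact funext fun i => if_neg (by simp [ht.ne'])
  · rw [trace_shiftMatrix ht d]
    simp

theorem shiftMatrix_single_mem_initialLieStab {t : ℕ} (ht : 0 < t)
    (hstrict : ∀ r, 0 < r → r + (1 + t) ≤ k →
      L (1 + t) + minWeight k L r ≠ minWeight k L (r + (1 + t))) :
    shiftMatrix k t (Pi.single (1 + t) 1) ∈ initialLieStab k a b L := by
  refine shiftMatrix_mem_initialLieStab ht
    (d := Pi.single (1 + t) (if L (1 + t) = minWeight k L (1 + t) then 1 else 0))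
    (fun n hn hnk => ?_) fun p q hp hq hpqk => ?_
  · obtain rfl | hn1 := eq_or_ne n 1
    · simp [minWeight_one]
    · simp [hn1]
  · rw [Pi.single_eq_of_ne (show p + q + t ≠ 1 + t by lia), ite_self, ite_eq_right_iff.mpr,
      ite_eq_right_iff.mpr, add_zero]
    · intro h
      obtain rfl | hq1 := eq_or_ne q 1
      · rw [Pi.single_eq_same, if_neg fun hL => hstrict p hp (by lia) ?_]
        obtain ⟨i, rfl⟩ : ∃ i : Fin k, p = i + 1 := ⟨⟨p - 1, by lia⟩, by grind⟩
        rw [add_assoc] at h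
        rw [← eq_minWeight_of_add_eq L h, hL, add_comm, h]
      · exact Pi.single_eq_of_ne (by lia) _
    · intro h
      obtain rfl | hp1 := eq_or_ne p 1
      · exact absurd (by rw [h]; congr 1; lia) (hstrict q hq (by lia))
      · exact Pi.single_eq_of_ne (by lia) _

theorem shiftMatrix_pair_mem_initialLieStab {t : ℕ} (ht : 0 < t) (hk : k = 3 + t)
    (hL : ∀ n, 0 < n → n < k → L n = minWeight k L n)
    (h₁ : L (2 + t) + L 1 = minWeight k L (3 + t))
    (h₂ : L (1 + t) + L 2 = minWeight k L (3 + t)) (h₁₂ : L 2 ≠ L 1 + L 1) :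
    shiftMatrix k t (Pi.single (1 + t) 1 - Pi.single (2 + t) 1) ∈ initialLieStab k a b L := by
  have h₃ : L (1 + t) + L 1 ≠ minWeight k L (2 + t) := by
    rw [← hL _ (by lia) (by lia)]
    intro h
    exact h₁₂ (by linarith)
  refine shiftMatrix_mem_initialLieStab ht (d := Pi.single (1 + t) 1 - Pi.single (2 + t) 1)
    (fun n hn hnk => ?_) fun p q hp hq hpqk => ?_
  · obtain rfl | hn3 := eq_or_ne n 3
    · simp
    · rw [if_pos (hL _ (by lia) (by lia)), if_pos (hL _ (by lia) (by lia))]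
  · obtain ⟨rfl, rfl⟩ | ⟨rfl, rfl⟩ | ⟨rfl, rfl⟩ : p = 1 ∧ q = 1 ∨ p = 1 ∧ q = 2 ∨ p = 2 ∧ q = 1 :=
      by lia
    · have h₃' : L 1 + L (1 + t) ≠ minWeight k L (2 + t) := add_comm (L 1) _ ▸ h₃
      simp [minWeight_one, ← hL 2 two_pos (by lia), ← hL (1 + t) (by lia) (by lia), h₃, h₃',
        h₁₂.symm]
    · simp [← hL 2 two_pos (by lia), ← hL (2 + t) (by lia) (by lia), add_comm (L 1), h₁, h₂]
    · simp [← hL (1 + t) (by lia) (by lia), h₁, h₂, add_comm (L 2), minWeight_one]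

theorem shiftMatrix_one_mem_initialLieStab (hL : ∀ n, 0 < n → n < k → L n = minWeight k L n)
    {c μ : ℕ → ℂ} (hμ : ∀ p q, minWeight k L (p + q) = minWeight k L p + minWeight k L q →
      μ (p + q) = μ p + μ q) (hμk : μ (k - 1) = 0)
    (hc : ∀ n, c (n + 1) =
      if minWeight k L (n + 1) = minWeight k L n + minWeight k L 1 then μ n else 0) :
    shiftMatrix k 1 c ∈ initialLieStab k a b L := by
  refine shiftMatrix_mem_initialLieStab (d := c) one_pos (fun n hn hnk => ?_)
    fun p q hp hq hpqk => ?_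
  · obtain hnk | rfl := hnk.lt_or_eq
    · rw [if_pos (hL _ (by lia) hnk), if_pos (hL _ hn (by lia))]
    · simp only [hc, show μ n = 0 from hμk, ite_self]
  · rw [hL (p + 1) (by lia) (by lia), hL p hp (by lia), hc, hc, hc]
    exact ite_add_ite_of_subadditive (minWeight_add_le L) hμ p q

theorem minWeight_le_mul (n : ℕ) : minWeight k L n ≤ n * L 1 := by
  have hle := minWeight_le_monWeight L (Finsupp.single (0 : Fin k) n)
  simpa [Finsupp.weight_single, indexWeight] using hle

theorem minWeight_eq_mul_of_le {n p : ℕ} (hp : p ≤ n) (hn : minWeight k L n = n * L 1) :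
    minWeight k L p = p * L 1 := by
  obtain ⟨q, rfl⟩ := Nat.exists_eq_add_of_le hp
  have hadd := minWeight_add_le (k := k) L p q
  have hple := minWeight_le_mul (k := k) (L := L) p
  have hqle := minWeight_le_mul (k := k) (L := L) q
  push_cast at hn
  linarith

theorem exists_ne_minWeight (hb : 0 < b) (hsum : ∑ i : Fin k, L (i + 1) = 0)
    (hab : a * ∑ i : Fin k, minWeight k L (i + 1) + b * L 1 = 0)
    {i : Fin k} (hi : L (i + 1) ≠ 0) : ∃ j : Fin k, L (j + 1) ≠ minWeight k L (j + 1) := by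
  by_contra! hL
  simp only [← hL, hsum, mul_zero, zero_add, mul_eq_zero, Nat.cast_eq_zero, hb.ne', false_or] at hab
  have hle (j : Fin k) : L (j + 1) ≤ 0 := by
    simpa [hL, hab] using minWeight_le_mul (k := k) (L := L) (j + 1)
  exact hi ((Finset.sum_eq_zero_iff_of_nonpos fun j _ => hle j).mp hsum i (Finset.mem_univ i))

theorem minWeight_ne_mul (hb : 0 < b) (hsum : ∑ i : Fin k, L (i + 1) = 0)
    (hab : a * ∑ i : Fin k, minWeight k L (i + 1) + b * L 1 = 0)
    {i : Fin k} (hi : L (i + 1) ≠ 0) (hL : ∀ n, 0 < n → n < k → L n = minWeight k L n) :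
    minWeight k L k ≠ k * L 1 := by
  intro hk
  have hmul {n : ℕ} (hn : n ≤ k) : minWeight k L n = n * L 1 := minWeight_eq_mul_of_le hn hk
  have hL₁ : L 1 = 0 := by
    have hfactor : (a * ∑ i : Fin k, ((i : ℝ) + 1) + b) * L 1 = 0 := by
      rw [← hab, add_mul, mul_assoc, Finset.sum_mul]
      simp [hmul (Fin.is_lt _)]
    exact (mul_eq_zero.mp hfactor).resolve_left (by positivity)
  have hzero {j : Fin k} (hj : j + 1 < k) : L (j + 1) = 0 := by
    rw [hL _ (Nat.succ_pos j) hj, hmul hj.le, hL₁, mul_zero]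
  obtain hik | hik := lt_or_eq_of_le (show i + 1 ≤ k from i.2)
  · exact hi (hzero hik)
  · rw [Finset.sum_eq_single i (fun j _ hj => hzero (by lia)) (by simp)] at hsum
    exact hi hsum

theorem exists_shiftMatrix_one_mem_initialLieStab (hk : 3 ≤ k)
    (hL : ∀ n, 0 < n → n < k → L n = minWeight k L n) (hlin : minWeight k L k ≠ k * L 1)
    (htop : L (k - 1) + L 1 = minWeight k L k) (htwo : L 2 = L 1 + L 1) :
    ∃ c : ℕ → ℂ, c 2 ≠ 0 ∧ shiftMatrix k 1 c ∈ initialLieStab k a b L := by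
  set M := minWeight k L
  have hL₁ : M 1 = L 1 := minWeight_one L
  let μ (n : ℕ) : ℂ := ((k - 1) * M n - n * M (k - 1) : ℝ)
  have hμ₁ : μ 1 ≠ 0 := by
    refine Complex.ofReal_ne_zero.mpr fun h => hlin ?_
    rw [Nat.cast_one, hL₁] at h
    linarith [hL (k - 1) (by lia) (by lia)]
  refine ⟨fun n => if M n = M (n - 1) + M 1 then μ (n - 1) else 0, ?_,
    shiftMatrix_one_mem_initialLieStab hL (μ := μ) (fun p q h => ?_) ?_ fun n => rfl⟩
  · simpa [← hL 2 two_pos (by lia), hL₁, htwo] using hμ₁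
  · have hM : M (p + q) = M p + M q := h
    simp only [μ, ← Complex.ofReal_add, hM]
    push_cast
    ring
  · simp only [μ, Nat.cast_pred (NeZero.pos k), sub_self, Complex.ofReal_zero]

theorem exists_shiftMatrix_mem_of_forall_eq_minWeight (a b : ℕ) (hk : 4 ≤ k)
    (hL : ∀ n, 0 < n → n < k → L n = minWeight k L n) (hlin : minWeight k L k ≠ k * L 1) :
    ∃ (t n : ℕ) (c : ℕ → ℂ), 0 < t ∧ t < n ∧ n < k ∧ c n ≠ 0 ∧
      shiftMatrix k t c ∈ initialLieStab k a b L := by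
  obtain ⟨t, rfl, ht⟩ : ∃ t, k = 3 + t ∧ 0 < t := ⟨k - 3, by lia, by lia⟩
  have h₁ := hL (1 + t) (by lia) (by lia)
  have h₂ := hL (2 + t) (by lia) (by lia)
  have hL₂ := hL 2 (by lia) (by lia)
  have hL₁ : minWeight (3 + t) L 1 = L 1 := minWeight_one L
  by_cases htop : L (2 + t) + L 1 = minWeight (3 + t) L (3 + t)
  swap
  · refine ⟨1 + t, 1 + (1 + t), _, by lia, by lia, by lia, by simp,
      shiftMatrix_single_mem_initialLieStab (by lia) fun r hr hrk h => htop ?_⟩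
    obtain rfl : r = 1 := by lia
    rwa [hL₁, show 1 + (1 + t) = 2 + t by lia, show 1 + (2 + t) = 3 + t by lia] at h
  by_cases htwo : L 2 = L 1 + L 1
  · rw [show 2 + t = 3 + t - 1 by lia] at htop
    obtain ⟨c, hc, hmem⟩ :=
      exists_shiftMatrix_one_mem_initialLieStab (a := a) (b := b) (by lia) hL hlin htop htwo
    exact ⟨1, 2, c, one_pos, one_lt_two, by lia, hc, hmem⟩
  by_cases hpair : L (1 + t) + L 2 = minWeight (3 + t) L (3 + t)
  · exact ⟨t, 1 + t, _, ht, by lia, by lia, by simp,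
      shiftMatrix_pair_mem_initialLieStab ht rfl hL htop hpair htwo⟩
  · refine ⟨t, 1 + t, _, ht, by lia, by lia, by simp,
      shiftMatrix_single_mem_initialLieStab ht fun r hr hrk h => ?_⟩
    obtain rfl | rfl : r = 1 ∨ r = 2 := by lia
    · rw [show 1 + (1 + t) = 2 + t by lia, ← h₂, hL₁] at h
      have hle₂ : L 2 ≤ 2 * L 1 := hL₂ ▸ mod_cast minWeight_le_mul (k := 3 + t) (L := L) 2
      have hle₃ := minWeight_add_le (k := 3 + t) L (1 + t) 2
      rw [show 1 + t + 2 = 3 + t by lia, ← h₁, ← hL₂, ← htop] at hle₃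
      exact htwo (by linarith)
    · rw [← hL₂, show 2 + (1 + t) = 3 + t by lia] at h
      exact hpair h

theorem add_one_le_finrank_initialLieStab (hk : 4 ≤ k) (hb : 0 < b)
    (hsum : ∑ i : Fin k, L (i + 1) = 0)
    (hab : a * ∑ i : Fin k, minWeight k L (i + 1) + b * L 1 = 0)
    {i : Fin k} (hi : L (i + 1) ≠ 0) : k + 1 ≤ Module.finrank ℂ (initialLieStab k a b L) := by
  suffices hX : ∃ (j : Fin k) (t n : ℕ) (c : ℕ → ℂ), L (j + 1) ≠ minWeight k L (j + 1) ∧ 0 < t ∧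
      t < n ∧ n ≤ k ∧ n ≠ j + 1 ∧ c n ≠ 0 ∧ shiftMatrix k t c ∈ initialLieStab k a b L by
    obtain ⟨j, t, n, c, hj, ht, htn, hnk, hnj, hc, hX⟩ := hX
    have hfin := card_add_one_le_finrank (fun A => mem_initialLieStab_of_column hj)
      (diagonal_mem_initialLieStab hsum hab) (i := i) (by exact_mod_cast hi) hX
      (fun r => if_neg (by lia)) (p := ⟨n - 1 - t, by lia⟩) (q := ⟨n - 1, by lia⟩)
      (by grind)
      (by simpa [shiftMatrix, show n - 1 - t + t = n - 1 by lia, show n - 1 + 1 = n by lia])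
    rwa [Fintype.card_fin] at hfin
  by_cases hL : ∀ n, 0 < n → n < k → L n = minWeight k L n
  · obtain ⟨t, n, c, ht, htn, hnk, hc, hX⟩ :=
      exists_shiftMatrix_mem_of_forall_eq_minWeight a b hk hL (minWeight_ne_mul hb hsum hab hi hL)
    obtain ⟨j, hj⟩ := exists_ne_minWeight hb hsum hab hi
    have hjk : (j : ℕ) + 1 = k := by
      by_contra hjk
      exact hj (hL _ (by lia) (by lia))
    exact ⟨j, t, n, c, hj, ht, htn, hnk.le, by lia, hc, hX⟩
  · push Not at hL
    obtain ⟨n, hn, hnk, hLn⟩ := hL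
    obtain ⟨j, rfl⟩ : ∃ j : Fin k, n = j + 1 := ⟨⟨n - 1, by lia⟩, by grind⟩
    exact ⟨j, k - 1, k, _, hLn, by lia, by lia, le_rfl, hnk.ne',
      by simp [show 1 + (k - 1) = k by lia],
      shiftMatrix_single_mem_initialLieStab (by lia) fun r hr hrk => by lia⟩

end InitialLieStabiliser

section TorusClosure

open Filter Topology

theorem exists_comp_comp_self_eq {K V W : Type*} [DivisionRing K] [AddCommGroup V] [Module K V]
    [AddCommGroup W] [Module K W] (f : V →ₗ[K] W) : ∃ g : W →ₗ[K] V, f ∘ₗ g ∘ₗ f = f := by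
  obtain ⟨s, hs⟩ := f.rangeRestrict.exists_rightInverse_of_surjective f.range_rangeRestrict
  obtain ⟨g, hg⟩ := s.exists_extend
  refine ⟨g, LinearMap.ext fun v => ?_⟩
  have hgf : g (f v) = s (f.rangeRestrict v) := LinearMap.congr_fun hg (f.rangeRestrict v)
  rw [LinearMap.comp_apply, LinearMap.comp_apply, hgf]
  exact congrArg Subtype.val (LinearMap.congr_fun hs (f.rangeRestrict v))

-- The coordinates with nonzero limit determine `v s` up to an error along which the remaining
-- coordinates decay; that error, for `s` far enough, is the direction of the ray.
theorem exists_tendsto_exp_ray {V ι α : Type*} [AddCommGroup V] [Module ℝ V] [Finite ι]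
    {l : Filter α} [l.NeBot] (ℓ : ι → V →ₗ[ℝ] ℝ) {v : α → V} {r : ι → ℝ}
    (hr : ∀ y, Tendsto (fun s => Real.exp (ℓ y (v s))) l (𝓝 (r y))) :
    ∃ μ w : V, ∀ y, Tendsto (fun s : ℝ => Real.exp (ℓ y (μ - s • w))) atTop (𝓝 (r y)) := by
  have := Fintype.ofFinite ι
  let Φ : V →ₗ[ℝ] {y // r y ≠ 0} → ℝ := LinearMap.pi fun y => ℓ y
  obtain ⟨R, hR⟩ := exists_comp_comp_self_eq Φ
  let m s := R (Φ (v s))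
  have hm (s) {y} (hy : r y ≠ 0) : ℓ y (m s) = ℓ y (v s) :=
    congrFun (LinearMap.congr_fun hR (v s)) ⟨y, hy⟩
  have hlog {y} (hy : r y ≠ 0) : Tendsto (fun s => ℓ y (v s)) l (𝓝 (Real.log (r y))) := by
    simpa using (hr y).log hy
  let c (y : {y // r y ≠ 0}) : ℝ := Real.log (r y)
  have hΦ : Tendsto (fun s => Φ (v s)) l (𝓝 c) := tendsto_pi_nhds.mpr fun y => hlog y.2
  have hℓ (y) : Tendsto (fun s => ℓ y (m s)) l (𝓝 (ℓ y (R c))) :=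
    ((ℓ y ∘ₗ R).continuous_of_finiteDimensional.tendsto c).comp hΦ
  have hpos : ∀ᶠ s in l, ∀ y, r y = 0 → 0 < ℓ y (m s - v s) := by
    refine eventually_all.mpr fun y => ?_
    by_cases hy : r y = 0
    · have hbot := Real.tendsto_exp_comp_nhds_zero.mp (hy ▸ hr y)
      filter_upwards [((hℓ y).add_atTop (tendsto_neg_atBot_atTop.comp hbot)).eventually_gt_atTop 0]
        with s hs _
      simpa [sub_eq_add_neg] using hs
    · exact .of_forall fun s h => absurd h hy
  obtain ⟨s, hs⟩ := hpos.exists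
  refine ⟨R c, m s - v s, fun y => ?_⟩
  simp only [map_sub (ℓ y) (R c), map_smul, smul_eq_mul]
  by_cases hy : r y = 0
  · rw [hy, Real.tendsto_exp_comp_nhds_zero]
    exact tendsto_atBot_add_const_left _ _
      (tendsto_neg_atTop_atBot.comp (tendsto_id.atTop_mul_const (hs y hy)))
  · have hrc : ℓ y (R c) = Real.log (r y) :=
      tendsto_nhds_unique (hℓ y) (by simpa only [hm _ hy] using hlog hy)
    have hry : 0 < r y :=
      (ge_of_tendsto' (hr y) fun s => (Real.exp_pos _).le).lt_of_ne' hy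
    simp [hm s hy, hrc, Real.exp_log hry]

variable {σ ι : Type*}

/-- The point of the torus with positive real coordinates whose logarithm is `v`. -/
noncomputable def expVec (v : σ → ℝ) : σ → ℂ :=
  fun i => Real.exp (v i)

theorem expVec_zero : expVec (0 : σ → ℝ) = 1 := by
  ext i
  simp [expVec]

theorem expVec_add (v w : σ → ℝ) : expVec (v + w) = expVec v * expVec w := by
  ext i
  simp [expVec, Complex.exp_add]

variable [Fintype σ]

/-- The action of the torus of the `t : σ → ℂ` on `ι → ℂ` for which the coordinate `y` has the
weight `n y`. -/
def torusAct (n : ι → σ → ℕ) (t : σ → ℂ) (p : ι → ℂ) : ι → ℂ :=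
  fun y => (∏ i, t i ^ n y i) * p y

theorem torusAct_torusAct (n : ι → σ → ℕ) (t t' : σ → ℂ) (p : ι → ℂ) :
    torusAct n t (torusAct n t' p) = torusAct n (t * t') p := by
  ext y
  simp only [torusAct, Pi.mul_apply, mul_pow, Finset.prod_mul_distrib, mul_assoc]

theorem torusAct_one (n : ι → σ → ℕ) (p : ι → ℂ) : torusAct n 1 p = p := by
  ext y
  simp [torusAct]

theorem continuous_torusAct (n : ι → σ → ℕ) :
    Continuous fun q : (σ → ℂ) × (ι → ℂ) => torusAct n q.1 q.2 := by
  unfold torusAct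
  fun_prop

theorem torusAct_expVec (n : ι → σ → ℕ) (v : σ → ℝ) (p : ι → ℂ) (y : ι) :
    torusAct n (expVec v) p y = Real.exp (∑ i, n y i * v i) * p y := by
  rw [torusAct, Real.exp_sum]
  simp [expVec, Complex.exp_nat_mul]

theorem prod_expVec (v : σ → ℝ) : ∏ i, expVec v i = Real.exp (∑ i, v i) := by
  simp [expVec, Complex.exp_sum]

theorem exists_tendsto_torusAct_expVec_ray [Finite ι] {α : Type*} {l : Filter α} [l.NeBot]
    (n : ι → σ → ℕ) (V : Submodule ℝ (σ → ℝ)) {v : α → σ → ℝ} (hv : ∀ s, v s ∈ V) {p x : ι → ℂ}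
    (hx : Tendsto (fun s => torusAct n (expVec (v s)) p) l (𝓝 x)) :
    ∃ μ ∈ V, ∃ w ∈ V,
      Tendsto (fun s : ℝ => torusAct n (expVec (μ - s • w)) p) atTop (𝓝 x) := by
  simp only [tendsto_pi_nhds, torusAct_expVec] at hx ⊢
  let ℓ (y : {y // p y ≠ 0}) : V →ₗ[ℝ] ℝ :=
    (∑ i, (n y i : ℝ) • LinearMap.proj i) ∘ₗ V.subtype
  have hℓ (y) (u : V) : ℓ y u = ∑ i, n y i * (u : σ → ℝ) i := by simp [ℓ]
  have hlim (y : {y // p y ≠ 0}) : Tendsto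
      (fun s => Complex.ofReal (Real.exp (ℓ y ⟨v s, hv s⟩))) l (𝓝 (x y / p y)) := by
    simpa [hℓ, y.2] using (hx y).div_const (p y)
  choose r hr using fun y =>
    Complex.isUniformEmbedding_ofReal.isClosedEmbedding.isClosed_range.mem_of_tendsto
      (hlim y) (.of_forall fun s => Set.mem_range_self _)
  obtain ⟨μ, w, hμw⟩ := exists_tendsto_exp_ray ℓ fun y =>
    tendsto_ofReal_iff.mp (hr y ▸ hlim y)
  refine ⟨μ, μ.2, w, w.2, fun y => ?_⟩
  by_cases hy : p y = 0
  · have hxy : x y = 0 := tendsto_nhds_unique (hx y) (by simp [hy])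
    simp [hy, hxy]
  · have hray := (tendsto_ofReal_iff.mpr (hμw ⟨y, hy⟩)).mul_const (p y)
    rw [hr, div_mul_cancel₀ _ hy] at hray
    simpa only [hℓ, V.coe_sub, V.coe_smul] using hray

theorem exists_eq_expVec_mul {t : σ → ℂ} (ht : ∏ i, t i = 1) :
    ∃ (v : σ → ℝ) (u : σ → ℂ), t = expVec v * u ∧ ∑ i, v i = 0 ∧
      (∀ i, ‖u i‖ = 1) ∧ ∏ i, u i = 1 := by
  have ht0 (i) : t i ≠ 0 := Finset.prod_ne_zero_iff.mp (ht ▸ one_ne_zero) i (Finset.mem_univ i)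
  have hnorm : ∏ i, ‖t i‖ = 1 := by rw [← norm_prod, ht, norm_one]
  refine ⟨fun i => Real.log ‖t i‖, fun i => t i / ‖t i‖, ?_, ?_, fun i => by simp [ht0], ?_⟩
  · ext i
    simp only [expVec, Pi.mul_apply, Real.exp_log (norm_pos_iff.mpr (ht0 i))]
    rw [mul_div_cancel₀ _ (by simp [ht0])]
  · rw [← Real.log_prod fun i _ => norm_ne_zero_iff.mpr (ht0 i), hnorm, Real.log_one]
  · rw [Finset.prod_div_distrib, ht, ← Complex.ofReal_prod, hnorm, Complex.ofReal_one, div_one]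

theorem isCompact_setOf_norm_eq_one_prod_eq_one :
    IsCompact {u : σ → ℂ | (∀ i, ‖u i‖ = 1) ∧ ∏ i, u i = 1} := by
  refine (isCompact_univ_pi fun _ => isCompact_sphere (0 : ℂ) 1).of_isClosed_subset ?_
    fun u hu i _ => by simpa using hu.1 i
  simp only [Set.ofPred_and, Set.ofPred_forall]
  refine (isClosed_iInter fun i => isClosed_eq ?_ ?_).inter (isClosed_eq ?_ ?_) <;> fun_prop

theorem exists_tendsto_torusAct_of_mem_closure [Finite ι] (n : ι → σ → ℕ) {p x : ι → ℂ}
    (hx : x ∈ closure {w | ∃ t : σ → ℂ, ∏ i, t i = 1 ∧ w = torusAct n t p}) :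
    ∃ (τ : σ → ℂ) (w : σ → ℝ) (x₀ : ι → ℂ), ∏ i, τ i = 1 ∧ ∑ i, w i = 0 ∧
      Tendsto (fun s : ℝ => torusAct n (expVec (-s • w)) p) atTop (𝓝 x₀) ∧
        x = torusAct n τ x₀ := by
  obtain ⟨z, hz, hzx⟩ := mem_closure_iff_seq_limit.mp hx
  choose t ht hzt using hz
  choose v u htvu hv hu using fun s => exists_eq_expVec_mul (ht s)
  obtain ⟨u₀, ⟨hu₀, hprod⟩, φ, hφ, hlim⟩ :=
    isCompact_setOf_norm_eq_one_prod_eq_one.tendsto_subseq hu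
  let V : Submodule ℝ (σ → ℝ) := LinearMap.ker (∑ i, LinearMap.proj i)
  have hV {v : σ → ℝ} : v ∈ V ↔ ∑ i, v i = 0 := by simp [V]
  have hinv {u : σ → ℂ} (hu : ∀ i, ‖u i‖ = 1) : u * u⁻¹ = 1 :=
    funext fun i => mul_inv_cancel₀ (norm_ne_zero_iff.mp (by simp [hu i]))
  have hpos : Tendsto (fun s => torusAct n (expVec (v (φ s))) p) atTop
      (𝓝 (torusAct n u₀⁻¹ x)) := by
    have hphase : Tendsto (fun s => (u (φ s))⁻¹) atTop (𝓝 u₀⁻¹) :=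
      tendsto_pi_nhds.mpr fun i => (tendsto_pi_nhds.mp hlim i).inv₀
        (norm_ne_zero_iff.mp (by simp [hu₀ i]))
    have hact := ((continuous_torusAct n).tendsto (u₀⁻¹, x)).comp
      (hphase.prodMk_nhds (hzx.comp hφ.tendsto_atTop))
    refine hact.congr fun s => ?_
    simp only [Function.comp_apply, hzt, htvu]
    rw [torusAct_torusAct, mul_left_comm, mul_comm _ (u _), hinv (hu _).1, mul_one]
  obtain ⟨μ, hμ, w, hw, hray⟩ :=
    exists_tendsto_torusAct_expVec_ray n V (fun s => hV.mpr (hv _)) hpos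
  refine ⟨expVec μ * u₀, w, torusAct n (expVec (-μ)) (torusAct n u₀⁻¹ x), ?_, hV.mp hw, ?_, ?_⟩
  · simp [Finset.prod_mul_distrib, prod_expVec, hV.mp hμ, hprod]
  · refine (((continuous_torusAct n).tendsto (expVec (-μ), _)).comp
      (tendsto_const_nhds.prodMk_nhds hray)).congr fun s => ?_
    simp only [Function.comp_apply, torusAct_torusAct, ← expVec_add]
    rw [neg_add_eq_sub, sub_sub_cancel_left, neg_smul]
  · rw [torusAct_torusAct, torusAct_torusAct, mul_assoc, mul_mul_mul_comm, hinv hu₀, mul_one,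
      ← expVec_add, add_neg_cancel, expVec_zero, torusAct_one]

end TorusClosure

section Degeneration

open Filter Topology

theorem tendsto_exp_mul_coeff {σ : Type*} {w : σ → ℝ} {c : ℝ} {p : MvPolynomial σ ℂ} {m : σ →₀ ℕ}
    (hm : p.coeff m ≠ 0 → c ≤ Finsupp.weight w m) :
    Tendsto (fun s : ℝ => (Real.exp (s * (c - Finsupp.weight w m)) : ℂ) * p.coeff m) atTop
      (𝓝 ((MvPolynomial.weightedHomogeneousComponent w c p).coeff m)) := by
  classical
  rw [MvPolynomial.coeff_weightedHomogeneousComponent]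
  by_cases h0 : p.coeff m = 0
  · simp [h0]
  obtain hc | hc := (hm h0).eq_or_lt
  · simp [hc]
  · rw [if_neg hc.ne', ← zero_mul (p.coeff m), ← Complex.ofReal_zero]
    refine (tendsto_ofReal_iff.mpr (Real.tendsto_exp_comp_nhds_zero.mpr ?_)).mul_const _
    exact tendsto_id.atTop_mul_const_of_neg (sub_neg.mpr hc)

theorem eq_zero_or_eq_of_tendsto_exp_smul {E : Type*} [NormedAddCommGroup E] [NormedSpace ℝ E]
    {y : ℝ → E} {c : ℝ} {x z : E} (hx : Tendsto y atTop (𝓝 x))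
    (hz : Tendsto (fun s => Real.exp (s * c) • y s) atTop (𝓝 z)) (hz₀ : z ≠ 0) :
    x = 0 ∨ c = 0 ∧ x = z := by
  obtain hc | rfl | hc := lt_trichotomy c 0
  · have hexp : Tendsto (fun s => Real.exp (s * c)) atTop (𝓝 0) :=
      Real.tendsto_exp_comp_nhds_zero.mpr (tendsto_id.atTop_mul_const_of_neg hc)
    exact absurd (tendsto_nhds_unique hz (zero_smul ℝ x ▸ hexp.smul hx)) hz₀
  · exact .inr ⟨rfl, tendsto_nhds_unique hx (by simpa using hz)⟩
  · have hexp : Tendsto (fun s => Real.exp (-(s * c))) atTop (𝓝 0) :=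
      Real.tendsto_exp_neg_atTop_nhds_zero.comp (tendsto_id.atTop_mul_const hc)
    have hzero := hexp.smul hz
    simp only [smul_smul, ← Real.exp_add, neg_add_cancel, Real.exp_zero, one_smul, zero_smul]
      at hzero
    exact .inl (tendsto_nhds_unique hx hzero)

variable {k a b : ℕ}

theorem actab_diagonal_tens (t : Fin k → ℂ) (c : Fin k → Mon k k → ℂ) (v : Fin k → ℂ) :
    actab (Matrix.diagonal t) (tens a b c v) =
      tens a b (fun j m => (∏ i, t i ^ m.1 i) * c j m) (fun i => t i * v i) := by
  classical
  rw [actab_tens]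
  congr 1
  · simp [symMat_diagonal]
  · exact funext (Matrix.mulVec_diagonal t v)

theorem continuous_tens (v : Fin k → ℂ) :
    Continuous fun c : Fin k → Mon k k → ℂ => tens a b c v := by
  unfold tens wedge
  fun_prop

theorem ptab_eq_tens (k a b : ℕ) :
    ptab k a b = tens a b (fun j => coords (jetPoly k (j + 1))) (e1 k) := by
  simp only [← colPoly_one]
  rfl

theorem prod_expVec_pow (L : ℕ → ℝ) (s : ℝ) (m : Mon k k) :
    ∏ i, expVec (-s • indexWeight k L) i ^ m.1 i = Real.exp (-s * monWeight k L m.exponent) := by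
  simp only [expVec, ← Complex.ofReal_pow, ← Complex.ofReal_prod, ← Real.exp_nat_mul,
    ← Real.exp_sum]
  simp [Finsupp.weight_apply, Finsupp.sum_fintype, Mon.exponent, Finset.mul_sum, mul_left_comm]

variable [NeZero k] (L : ℕ → ℝ)

theorem tens_initialForm_ne_zero :
    tens a b (fun j : Fin k => coords (initialForm k L (j + 1))) (e1 k) ≠ 0 := by
  have hcoeff (j : Fin k) : ∃ m : Mon k k, coords (initialForm k L (j + 1)) m ≠ 0 := by
    obtain ⟨s, hs⟩ := MvPolynomial.ne_zero_iff.mp (initialForm_ne_zero L j.1.succ_pos j.2)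
    obtain ⟨m, rfl⟩ :=
      exists_exponent_eq (mem_symLE.mp (initialForm_mem_symLE L j.1.succ_pos j.2) s hs)
    exact ⟨m, hs⟩
  choose m hm using hcoeff
  have hdiag : (Matrix.of fun j i : Fin k => coords (initialForm k L (j + 1)) (m i)) =
      Matrix.diagonal fun j : Fin k => coords (initialForm k L (j + 1)) (m j) := by
    ext j i
    obtain rfl | hij := eq_or_ne j i
    · simp
    · rw [Matrix.diagonal_apply_ne _ hij]
      by_contra hne
      have hj := isWeightedHomogeneous_id_initialForm L j.2 hne
      have hi := isWeightedHomogeneous_id_initialForm L i.2 (hm i)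
      exact hij (Fin.ext (Nat.succ_injective (hj.symm.trans hi)))
  intro h
  have h0 := congrFun h (fun _ => m, fun _ => 0)
  simp [tens, wedge_eq_det, hdiag, e1, hm, Finset.prod_eq_zero_iff] at h0

theorem exp_smul_actab_ptab (s : ℝ) :
    Real.exp (s * (a * ∑ i : Fin k, minWeight k L (i + 1) + b * L 1)) •
      actab (Matrix.diagonal (expVec (-s • indexWeight k L))) (ptab k a b) =
    tens a b (fun j m => (Real.exp (s * (minWeight k L (j + 1) - monWeight k L m.exponent)) : ℂ) *
      (jetPoly k (j + 1)).coeff m.exponent) (e1 k) := by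
  have hvec : (Real.exp (s * L 1) : ℂ) • (fun i => expVec (-s • indexWeight k L) i * e1 k i) =
      e1 k := by
    ext i
    obtain rfl | hi := eq_or_ne i 0
    · simp [e1_eq_single, expVec, indexWeight, ← Complex.exp_add]
    · simp [e1_eq_single, hi]
  let N : Matrix (Fin k) (Fin k) ℂ :=
    Matrix.diagonal fun j => (Real.exp (s * minWeight k L (j + 1)) : ℂ)
  have hscale : (Real.exp (s * (a * ∑ i : Fin k, minWeight k L (i + 1) + b * L 1)) : ℂ) =
      N.det ^ a * (Real.exp (s * L 1) : ℂ) ^ b := by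
    rw [Matrix.det_diagonal]
    simp only [← Complex.ofReal_prod, ← Complex.ofReal_pow, ← Complex.ofReal_mul, ← Real.exp_sum,
      ← Real.exp_nat_mul, ← Real.exp_add, ← Finset.mul_sum]
    ring_nf
  rw [← Complex.coe_smul, hscale, ptab_eq_tens, actab_diagonal_tens, ← tens_sum_mul, hvec]
  congr 1
  ext j m
  simp only [N, prod_expVec_pow, coords, Matrix.diagonal_apply, ite_mul, zero_mul,
    Finset.sum_ite_eq', Finset.mem_univ, if_true]
  rw [← mul_assoc, ← Complex.ofReal_mul, ← Real.exp_add]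
  ring_nf

theorem tendsto_exp_smul_actab_ptab :
    Tendsto (fun s : ℝ => Real.exp (s * (a * ∑ i : Fin k, minWeight k L (i + 1) + b * L 1)) •
      actab (Matrix.diagonal (expVec (-s • indexWeight k L))) (ptab k a b)) atTop
      (𝓝 (tens a b (fun j => coords (initialForm k L (j + 1))) (e1 k))) := by
  simp only [exp_smul_actab_ptab]
  refine ((continuous_tens (e1 k)).tendsto _).comp
    (tendsto_pi_nhds.mpr fun j => tendsto_pi_nhds.mpr fun m => tendsto_exp_mul_coeff fun hm => ?_)
  have hw := isWeightedHomogeneous_jetPoly j.2 hm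
  exact (congrArg (minWeight k L) hw).symm.trans_le (minWeight_le_monWeight L m.exponent)

end Degeneration

section TorusOrbit

open Filter Topology

variable {k a b : ℕ}

theorem actab_diagonal_eq_torusAct (t : Fin k → ℂ) (p : Wab k a b) :
    actab (Matrix.diagonal t) p = torusAct torusWeight t p :=
  funext (actab_diagonal t p)

theorem mem_Tset_iff {g : Matrix (Fin k) (Fin k) ℂ} :
    g ∈ Tset k ↔ ∃ t : Fin k → ℂ, ∏ i, t i = 1 ∧ g = Matrix.diagonal t := by
  constructor
  · rintro ⟨hdet, hoff⟩
    have hg : g = Matrix.diagonal g.diag :=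
      (Matrix.isDiag_iff_diagonal_diag g).mp (fun i j hij => hoff i j hij) |>.symm
    exact ⟨g.diag, by rw [← Matrix.det_diagonal, ← hg, hdet], hg⟩
  · rintro ⟨t, ht, rfl⟩
    exact ⟨by rw [Matrix.det_diagonal, ht], fun i j => Matrix.diagonal_apply_ne t⟩

theorem setOf_actab_Tset_eq (p : Wab k a b) :
    {w | ∃ g ∈ Tset k, w = actab g p} =
      {w | ∃ t : Fin k → ℂ, ∏ i, t i = 1 ∧ w = torusAct torusWeight t p} := by
  ext w
  simp only [mem_Tset_iff, ← actab_diagonal_eq_torusAct, Set.mem_ofPred_eq]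
  grind

theorem indexWeight_surjective (M : Type*) [Zero M] (k : ℕ) :
    Function.Surjective (indexWeight k : (ℕ → M) → Fin k → M) := fun w =>
  ⟨Function.extend (fun i : Fin k => (i : ℕ) + 1) w 0,
    funext ((Nat.succ_injective.comp Fin.val_injective).extend_apply w 0)⟩

theorem exists_tendsto_actab_of_mem_closure {p x : Wab k a b}
    (hx : x ∈ closure {w | ∃ g ∈ Tset k, w = actab g p}) :
    ∃ (τ : Fin k → ℂ) (L : ℕ → ℝ) (x₀ : Wab k a b),
      ∏ i, τ i = 1 ∧ ∑ i : Fin k, L (i + 1) = 0 ∧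
      Tendsto (fun s : ℝ => actab (Matrix.diagonal (expVec (-s • indexWeight k L))) p) atTop
        (𝓝 x₀) ∧ x = actab (Matrix.diagonal τ) x₀ := by
  rw [setOf_actab_Tset_eq] at hx
  obtain ⟨τ, w, x₀, hτ, hw, hx₀, rfl⟩ := exists_tendsto_torusAct_of_mem_closure _ hx
  obtain ⟨L, rfl⟩ := indexWeight_surjective ℝ k w
  simp only [actab_diagonal_eq_torusAct]
  exact ⟨τ, L, x₀, hτ, hw, hx₀, rfl⟩

theorem two_mul_add_one_le_dimH_stabSet_of_tendsto [NeZero k] (hk : 4 ≤ k) (hb : 0 < b)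
    {L : ℕ → ℝ} (hsum : ∑ i : Fin k, L (i + 1) = 0) {i : Fin k} (hi : L (i + 1) ≠ 0)
    {x : Wab k a b}
    (hx : Tendsto (fun s : ℝ => actab (Matrix.diagonal (expVec (-s • indexWeight k L)))
      (ptab k a b)) atTop (𝓝 x)) :
    ((2 * (k + 1) : ℕ) : ℝ≥0∞) ≤ dimH (stabSet x) := by
  obtain rfl | ⟨hab, rfl⟩ := eq_zero_or_eq_of_tendsto_exp_smul hx (tendsto_exp_smul_actab_ptab L)
    (tens_initialForm_ne_zero L)
  · exact two_mul_le_dimH_stabSet_zero (by nlinarith)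
  · have hlie := add_one_le_finrank_initialLieStab hk hb hsum hab hi
    calc ((2 * (k + 1) : ℕ) : ℝ≥0∞)
      _ ≤ (2 * Module.finrank ℂ (initialLieStab k a b L) : ℕ) := by gcongr
      _ ≤ _ := two_mul_finrank_lieStab_le_dimH
        (fun j => initialForm_mem_symLE L j.1.succ_pos j.2) (e1 k)

end TorusOrbit

theorem torus_orbit_closure_general (k : ℕ) (hk : 4 ≤ k) (a b : ℕ) (hb : 0 < b) (x : Wab k a b)
    (hx : x ∈ closure {w : Wab k a b | ∃ g ∈ Tset k, w = actab g (ptab k a b)}) :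
    x ∈ {w : Wab k a b | ∃ g ∈ Tset k, w = actab g (ptab k a b)} ∨
      ((2 * (k + 1) : ℕ) : ℝ≥0∞) ≤ dimH (stabSet x) := by
  have : NeZero k := ⟨by omega⟩
  obtain ⟨τ, L, x₀, hτ, hsum, hlim, rfl⟩ := exists_tendsto_actab_of_mem_closure hx
  by_cases hL : indexWeight k L = 0
  · have hx₀ : ptab k a b = x₀ := by
      simpa [hL, expVec_zero, actab_one] using hlim
    exact .inl ⟨_, mem_Tset_iff.mpr ⟨τ, hτ, rfl⟩, by rw [hx₀]⟩
  · obtain ⟨i, hi⟩ := Function.ne_iff.mp hL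
    have hdet : IsUnit (Matrix.diagonal τ).det := by simp [hτ]
    exact .inr ((two_mul_add_one_le_dimH_stabSet_of_tendsto hk hb hsum hi hlim).trans
      (dimH_stabSet_le_dimH_stabSet_actab (Matrix.nonsing_inv_mul _ hdet) x₀))

/-- For `k ≥ 4` there is a constant `C(k)` such that for all strictly
positive integers `a`, `b` with `b/a > C(k)`: every point of the closure of the
`T_k`-orbit of `p_k^{⊗a} ⊗ e₁^{⊗b}` (where `T_k` is the standard maximal torus of
`SL(k,ℂ)`) either lies in that orbit, or its stabiliser in `SL(k,ℂ)` has (complex)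
dimension at least `k+1`, i.e. Hausdorff dimension at least `2(k+1)`. -/
theorem torus_orbit_closure (k : ℕ) (hk : 4 ≤ k) :
    ∃ C : ℝ, ∀ a b : ℕ, 0 < a → 0 < b → C < (b : ℝ) / (a : ℝ) →
      ∀ x ∈ closure {w : Wab k a b | ∃ g ∈ Tset k, w = actab g (ptab k a b)},
        x ∈ {w : Wab k a b | ∃ g ∈ Tset k, w = actab g (ptab k a b)} ∨
          ((2 * (k + 1) : ℕ) : ℝ≥0∞) ≤ dimH (stabSet x) := by
  exact ⟨0, fun a b _ hb _ => torus_orbit_closure_general k hk a b hb⟩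

end JetPaper
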